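/- arXiv:1805.04337 — 4 statements merged into one kernel-verified Lean document; each statement's English description precedes it below -/
import Mathlib

section
/- Let n ≥ 4 be even, ν = 2, c_W = n−1, h = n/2 − 1, and let c_R be an integer with 2 ≤ c_R ≤ n−1; set c := c_W + c_R − n = c_R − 1 and assume c ≥ 2. Then there exists K_0 such that for every K ≥ K_0 with c² dividing (c+2)K, there exists an (n, n−1, c_R, 2, n/2−1, 2^K, q) multi-version code with side information whose storage cost is log₂ q = (c+2)K/c² bits (this is the cost of Construction 1, which allocates K/c bits to version 2 at server i exactly when at least n−2 servers of H_i have received version 2, and the remaining (c+2)K/c² − K/c bits to version 1). -/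
open Finset

/-- The `h`-hop neighborhood `H_i = {i-h, …, i+h}` of server `i` on the ring `ZMod n`. -/
noncomputable def nbhd (n h : ℕ) (i : ZMod n) : Finset (ZMod n) :=
  (Finset.Icc (-(h : ℤ)) (h : ℤ)).image (fun d : ℤ => (i + (d : ZMod n)))

/-- The set `A_S(u)` of servers that received version `u` in state `S`. -/
def received (n ν : ℕ) [NeZero n] (S : ZMod n → Finset (Fin ν)) (u : Fin ν) :
    Finset (ZMod n) :=
  Finset.univ.filter (fun j => u ∈ S j)

/-- An `(n, c_W, c_R, ν, h, 2^K, q)` multi-version code with side information.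
Servers are indexed by `ZMod n`, versions by `Fin ν` (higher index = later version),
message values are `K`-bit strings `Fin K → Bool`, and stored symbols lie in `Fin q`.
The encoder of server `i` may depend only on the states of the servers in its
`h`-hop neighborhood and on the values of the versions that server `i` received;
the decoder for a set `T` of `c_R` servers may depend only on the symbols stored by
the servers of `T`, and must return the value of some version at least as late as the
latest complete version whenever a complete version exists (and `NULL`, i.e. `none`,
otherwise). -/
structure MVCode (n cW cR ν h K q : ℕ) [NeZero n] where
  enc : ZMod n → (ZMod n → Finset (Fin ν)) → (Fin ν → (Fin K → Bool)) → Fin q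
  dec : (ZMod n → Finset (Fin ν)) → Finset (ZMod n) → (ZMod n → Fin q) →
    Option (Fin K → Bool)
  enc_local_state : ∀ (i : ZMod n) (S S' : ZMod n → Finset (Fin ν))
      (W : Fin ν → Fin K → Bool),
    (∀ j ∈ nbhd n h i, S j = S' j) → enc i S W = enc i S' W
  enc_local_word : ∀ (i : ZMod n) (S : ZMod n → Finset (Fin ν))
      (W W' : Fin ν → Fin K → Bool),
    (∀ u ∈ S i, W u = W' u) → enc i S W = enc i S W'
  dec_local : ∀ (S : ZMod n → Finset (Fin ν)) (T : Finset (ZMod n))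
      (X X' : ZMod n → Fin q),
    (∀ j ∈ T, X j = X' j) → dec S T X = dec S T X'
  dec_correct : ∀ (S : ZMod n → Finset (Fin ν)) (W : Fin ν → Fin K → Bool)
      (T : Finset (ZMod n)), T.card = cR →
    (∃ u : Fin ν, cW ≤ (received n ν S u).card) →
    ∃ m : Fin ν, (∀ u : Fin ν, cW ≤ (received n ν S u).card → u ≤ m) ∧
      dec S T (fun j => enc j S W) = some (W m)
  dec_null : ∀ (S : ZMod n → Finset (Fin ν)) (W : Fin ν → Fin K → Bool)
      (T : Finset (ZMod n)), T.card = cR →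
    (∀ u : Fin ν, (received n ν S u).card < cW) →
    dec S T (fun j => enc j S W) = none

open Polynomial

/-- Evaluation points and scalars used by the code. -/
structure Setup (G F : Type) [AddCommGroup G] [Field F] (t k e : ℕ) where
  p : G → Fin t → F
  q : G → Fin t → F
  z : Fin k → F
  y : G → F
  δ : G
  hpp : ∀ i j l l', p i l = p j l' → i = j ∧ l = l'
  hqq : ∀ i j l l', q i l = q j l' → i = j ∧ l = l'
  hzz : ∀ l l', z l = z l' → l = l'
  hpq : ∀ i j l l', p i l ≠ q j l'
  hpz : ∀ i l l', p i l ≠ z l'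
  hqz : ∀ i l l', q i l ≠ z l'
  hy0 : ∀ i, y i ≠ 0
  hyy : ∀ i j, y i = y j → i = j
  hδ : δ + δ = 0
  hδ0 : δ ≠ 0
  htk : t ≤ k
  het : e ≤ t

namespace Setup

set_option linter.unusedSectionVars false

variable {G F : Type} [AddCommGroup G] [DecidableEq G] [Field F] {t k e : ℕ}
  (P : Setup G F t k e)

noncomputable def Z : F[X] := ∏ l : Fin k, (X - C (P.z l))

def zt (l : Fin t) : F := P.z (Fin.castLE P.htk l)

def ze (l : Fin e) : F := P.z (Fin.castLE (P.het.trans P.htk) l)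

noncomputable def E : F[X] := ∏ l : Fin e, (X - C (P.ze l))

noncomputable def R (f : F[X]) : F[X] := f %ₘ P.E

/-- Symbol `l` stored at server `i`, which sees `M` lacking version 2 and `N` lacking version 1. -/
noncomputable def core (i : G) (M N : Finset G) (f0 f1 : F[X]) (l : Fin t) : F :=
  if i ∈ M then
    (if i ∈ N then 0 else if M = {i} then f0.eval (P.zt l) else f0.eval (P.p i l))
  else if M = ∅ then f1.eval (P.p i l)
  else if M.card = 1 then
    (if N = {i} then f1.eval (P.zt l)
    else f1.eval (P.q (i + ∑ j ∈ M, j) l) +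
      (if i ∉ N ∧ (∑ j ∈ M, j) ∉ N ∧ N.card ≤ 1 then
        P.y (∑ j ∈ M, j) * (P.Z * P.R f0).eval (P.q (i + ∑ j ∈ M, j) l) else 0))
  else if i ∈ N then 0 else f0.eval (P.p i l)

lemma core_sub (i : G) (M N : Finset G) (f0 f1 g0 g1 : F[X]) (l : Fin t) :
    P.core i M N (f0 - g0) (f1 - g1) l = P.core i M N f0 f1 l - P.core i M N g0 g1 l := by
  unfold core R
  rw [sub_modByMonic]
  split_ifs <;> simp [mul_sub]; ring

lemma core_congr (i : G) (M N : Finset G) (f0 f1 g0 g1 : F[X]) (l : Fin t)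
    (h0 : i ∉ N → f0 = g0) (h1 : i ∉ M → f1 = g1) :
    P.core i M N f0 f1 l = P.core i M N g0 g1 l := by
  unfold core
  by_cases hM : i ∈ M <;> by_cases hN : i ∈ N <;> simp_all

lemma vanish (B : Finset G) (v : G → Fin t → F)
    (hv : ∀ i ∈ B, ∀ j ∈ B, ∀ l l', v i l = v j l' → i = j ∧ l = l') (D : F[X]) (m : ℕ)
    (hd : D.degree < (m : WithBot ℕ)) (hm : m ≤ B.card * t)
    (h : ∀ i ∈ B, ∀ l, D.eval (v i l) = 0) : D = 0 := by
  refine eq_zero_of_degree_lt_of_eval_index_eq_zero (v := fun x : G × Fin t => v x.1 x.2)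
    (B ×ˢ (Finset.univ : Finset (Fin t))) ?_ ?_ ?_
  · rintro ⟨i, l⟩ hi ⟨j, l'⟩ hj hij
    simp only [Finset.coe_product, Set.mem_prod, Finset.mem_coe] at hi hj
    obtain ⟨h1, h2⟩ := hv i hi.1 j hj.1 l l' hij
    simp [h1, h2]
  · refine lt_of_lt_of_le hd ?_
    simp only [Finset.card_product, Finset.card_univ, Fintype.card_fin]
    exact_mod_cast hm
  · rintro ⟨i, l⟩ hi
    simp only [Finset.mem_product] at hi
    exact h i hi.1 l

lemma monic_Z : P.Z.Monic := monic_prod_of_monic _ _ fun _ _ => monic_X_sub_C _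
lemma monic_E : P.E.Monic := monic_prod_of_monic _ _ fun _ _ => monic_X_sub_C _

lemma degree_Z : P.Z.degree = k := by
  unfold Z
  rw [degree_prod_of_monic _ _ fun _ _ => monic_X_sub_C _]
  simp

lemma degree_E : P.E.degree = e := by
  unfold E
  rw [degree_prod_of_monic _ _ fun _ _ => monic_X_sub_C _]
  simp

lemma eval_Z (x : F) : P.Z.eval x = 0 ↔ ∃ l, x = P.z l := by
  unfold Z
  rw [eval_prod, Finset.prod_eq_zero_iff]
  simp [sub_eq_zero]

lemma degree_R (f : F[X]) : (P.R f).degree < (e : WithBot ℕ) := by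
  rw [← P.degree_E]
  exact degree_modByMonic_lt _ P.monic_E

lemma eval_R (f : F[X]) (l : Fin e) : (P.R f).eval (P.ze l) = f.eval (P.ze l) := by
  have h := congrArg (eval (P.ze l)) (modByMonic_add_div f P.E)
  have h2 : P.E.eval (P.ze l) = 0 := by
    unfold E
    rw [eval_prod, Finset.prod_eq_zero_iff]
    exact ⟨l, by simp⟩
  rw [eval_add, eval_mul, h2, zero_mul, add_zero] at h
  exact h

lemma R_eq_zero (f : F[X]) (h : ∀ l, f.eval (P.zt l) = 0) : P.R f = 0 := by
  refine eq_zero_of_degree_lt_of_eval_index_eq_zero (v := P.ze) Finset.univ ?_ ?_ ?_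
  · intro a _ b _ hab
    have := P.hzz _ _ hab
    simpa [Fin.ext_iff] using this
  · simpa using P.degree_R f
  · intro l _
    rw [P.eval_R]
    exact h (Fin.castLE P.het l)

lemma mix_eq_zero (D f : F[X]) (c : F) (hD : D.degree < (k : WithBot ℕ))
    (h : D + C c * (P.Z * P.R f) = 0) : D = 0 := by
  by_cases hr : C c * P.R f = 0
  · have : C c * (P.Z * P.R f) = 0 := by rw [mul_left_comm, hr, mul_zero]
    simpa [this] using h
  · exfalso
    have h1 : D = - (P.Z * (C c * P.R f)) := by
      rw [eq_neg_iff_add_eq_zero, ← h]; ring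
    rw [h1, degree_neg, degree_mul, degree_Z, degree_eq_natDegree hr] at hD
    have : ((k + (C c * P.R f).natDegree : ℕ) : WithBot ℕ) < (k : ℕ) := by exact_mod_cast hD
    have := WithBot.coe_lt_coe.mp this
    simp at this

lemma mix_degree (D f : F[X]) (c : F) (hD : D.degree < (k : WithBot ℕ)) (he : 0 < e) :
    (D + C c * (P.Z * P.R f)).degree < ((k + e : ℕ) : WithBot ℕ) := by
  refine lt_of_le_of_lt (degree_add_le _ _) (max_lt ?_ ?_)
  · refine lt_of_lt_of_le hD ?_
    exact_mod_cast Nat.le_add_right k e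
  · by_cases hr : C c * P.R f = 0
    · rw [mul_left_comm, hr]; simp
    · rw [mul_left_comm, degree_mul, degree_Z]
      have h1 : (C c * P.R f).degree < (e : WithBot ℕ) := by
        refine lt_of_le_of_lt ?_ (P.degree_R f)
        have hc : c ≠ 0 := by rintro rfl; simp at hr
        rw [degree_C_mul hc]
      rw [degree_eq_natDegree hr] at h1 ⊢
      have : (C c * P.R f).natDegree < e := by exact_mod_cast h1
      exact_mod_cast (by omega : k + (C c * P.R f).natDegree < k + e)

/-- Case A1: exactly one server lacks version 2. -/
lemma caseA1 (c : ℕ) (hk : k = c * t + e) (he : 0 < e) (a : G) (L T : Finset G)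
    (hT : T.card = c + 3) (D0 D1 : F[X]) (hD1 : D1.degree < (k : WithBot ℕ))
    (h : ∀ i ∈ T, ∀ l, P.core i (Finset.erase {a} (i + P.δ)) (L.erase (i + P.δ)) D0 D1 l = 0) :
    D1 = 0 := by
  have het := P.het
  have hδδ : ∀ i : G, i + P.δ + P.δ = i := fun i => by rw [add_assoc, P.hδ, add_zero]
  have hne : ∀ i : G, i + P.δ ≠ i := fun i hi => P.hδ0 (by simpa using hi)
  let sp : G → Prop := fun i => L.erase (i + P.δ) = {i}
  classical
  let v : G → Fin t → F := fun i l =>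
    if i = a + P.δ then P.p i l else if sp i then P.zt l else P.q (i + a) l
  let yy : G → F := fun i => if i ≠ a + P.δ ∧ i ∉ L.erase (i + P.δ) ∧ a ∉ L.erase (i + P.δ) ∧
    (L.erase (i + P.δ)).card ≤ 1 then P.y a else 0
  have key : ∀ i ∈ T, i ≠ a → ∀ l,
      D1.eval (v i l) + yy i * (P.Z * P.R D0).eval (v i l) = 0 := by
    intro i hi hia l
    have hh := h i hi l
    by_cases h1 : i = a + P.δ
    · have : Finset.erase {a} (i + P.δ) = (∅ : Finset G) := by
        rw [h1, hδδ]; simp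
      rw [this] at hh
      simp only [core, Finset.notMem_empty, if_false, if_true] at hh
      simp [v, yy, h1] at hh ⊢
      exact hh
    · have : Finset.erase {a} (i + P.δ) = ({a} : Finset G) := by
        apply Finset.erase_eq_of_notMem
        simp only [Finset.mem_singleton]
        intro h2
        exact h1 (by rw [← h2, hδδ])
      rw [this] at hh
      simp only [core, Finset.mem_singleton, hia, if_false, Finset.singleton_ne_empty,
        Finset.card_singleton, if_true, Finset.sum_singleton] at hh
      by_cases h2 : sp i
      · have h2' : L.erase (i + P.δ) = {i} := h2
        simp only [h2', if_true] at hh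
        have hy : yy i = 0 := by
          simp only [yy]
          rw [if_neg]
          rintro ⟨-, h3, -⟩
          rw [h2'] at h3
          simp at h3
        rw [hy]
        simp [v, h1, h2, hh]
      · have h2' : ¬ L.erase (i + P.δ) = {i} := h2
        simp only [h2', if_false] at hh
        simp only [v, yy, h1, h2, if_false, ne_eq, not_false_eq_true, true_and]
        split_ifs at hh ⊢ <;> simpa using hh
  have inj : ∀ B : Finset G, (∀ i ∈ B, ∀ j ∈ B, sp i → sp j → i = j) →
      ∀ i ∈ B, ∀ j ∈ B, ∀ l l', v i l = v j l' → i = j ∧ l = l' := by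
    intro B hB i hi j hj l l' hv
    have hpp := P.hpp
    have hqq := P.hqq
    have hzz : ∀ l l', P.zt l = P.zt l' → l = l' := by
      intro l l' hl
      have := P.hzz _ _ hl
      simpa [Fin.ext_iff] using this
    have hpq := P.hpq
    have hpz : ∀ i l l', P.p i l ≠ P.zt l' := fun i l l' => P.hpz _ _ _
    have hqz : ∀ i l l', P.q i l ≠ P.zt l' := fun i l l' => P.hqz _ _ _
    simp only [v] at hv
    split_ifs at hv with h1 h2 h3 h4 h5 h6 h7
    · exact hpp _ _ _ _ hv
    · exact absurd hv (hpz _ _ _)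
    · exact absurd hv (hpq _ _ _ _)
    · exact absurd hv.symm (hpz _ _ _)
    · exact ⟨hB i hi j hj (by assumption) (by assumption), hzz _ _ hv⟩
    · exact absurd hv.symm (hqz _ _ _)
    · exact absurd hv.symm (hpq _ _ _ _)
    · exact absurd hv (hqz _ _ _)
    · have := hqq _ _ _ _ hv
      exact ⟨add_right_cancel this.1, this.2⟩
  have spmem : ∀ i, sp i → i ∈ L := by
    intro i hi
    have hi' : L.erase (i + P.δ) = {i} := hi
    have : i ∈ L.erase (i + P.δ) := by rw [hi']; simp
    exact Finset.mem_of_mem_erase this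
  have sp2 : ∀ i j, sp i → sp j → i = j ∨ j = i + P.δ := by
    intro i j hi hj
    have hi' : L.erase (i + P.δ) = {i} := hi
    by_contra hcon
    push Not at hcon
    have : j ∈ L.erase (i + P.δ) := Finset.mem_erase.mpr ⟨hcon.2, spmem j hj⟩
    rw [hi', Finset.mem_singleton] at this
    exact hcon.1 this.symm
  -- the pure case
  have pure : (∀ i ∈ T, i ≠ a → ∀ l, yy i * (P.Z * P.R D0).eval (v i l) = 0) → D1 = 0 := by
    intro hp
    obtain ⟨j0, hj0⟩ : ∃ j0, ∀ i j, i ≠ j0 → j ≠ j0 → sp i → sp j → i = j := by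
      by_cases hs : ∃ i0, sp i0
      · obtain ⟨i0, hi0⟩ := hs
        refine ⟨i0 + P.δ, fun i j hi hj hsi hsj => ?_⟩
        have h1 := sp2 i0 i hi0 hsi
        have h2 := sp2 i0 j hi0 hsj
        rcases h1 with h1 | h1 <;> rcases h2 with h2 | h2
        · rw [← h1, ← h2]
        · exact absurd h2 hj
        · exact absurd h1 hi
        · exact absurd h1 hi
      · exact ⟨a, fun i j _ _ hsi _ => absurd ⟨i, hsi⟩ hs⟩
    refine vanish ((T.erase a).erase j0) v (inj _ ?_) D1 k hD1 ?_ ?_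
    · intro i hi j hj
      exact hj0 i j (Finset.ne_of_mem_erase hi) (Finset.ne_of_mem_erase hj)
    · have h1 := Finset.pred_card_le_card_erase (s := T) (a := a)
      have h2 := Finset.pred_card_le_card_erase (s := T.erase a) (a := j0)
      have h3 : c + 1 ≤ ((T.erase a).erase j0).card := by omega
      calc k ≤ (c + 1) * t := by rw [hk, add_mul]; omega
        _ ≤ _ := Nat.mul_le_mul_right _ h3
    · intro i hi l
      have hi1 := Finset.mem_of_mem_erase hi
      have hi2 := Finset.mem_of_mem_erase hi1
      have hia := Finset.ne_of_mem_erase hi1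
      have := key i hi2 hia l
      rwa [hp i hi2 hia l, add_zero] at this
  by_cases haL : a ∈ L
  · apply pure
    intro i hi hia l
    have : yy i = 0 := by
      simp only [yy]
      rw [if_neg]
      rintro ⟨h1, -, h2, -⟩
      apply h2
      refine Finset.mem_erase.mpr ⟨?_, haL⟩
      intro h3
      exact h1 (by rw [h3, hδδ])
    rw [this, zero_mul]
  by_cases haT : a ∈ T
  · apply pure
    intro i hi hia l
    have : P.R D0 = 0 := by
      apply P.R_eq_zero
      intro l
      have hh := h a haT l
      have h1 : Finset.erase {a} (a + P.δ) = ({a} : Finset G) := by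
        apply Finset.erase_eq_of_notMem
        simpa using P.hδ0
      rw [h1] at hh
      simpa [core, haL] using hh
    simp [this]
  by_cases hL1 : L.card ≤ 1
  · have hF : D1 + C (P.y a) * (P.Z * P.R D0) = 0 := by
      refine vanish (T.erase (a + P.δ)) v (inj _ ?_) _ (k + e) (P.mix_degree _ _ _ hD1 he) ?_ ?_
      · intro i _ j _ hi hj
        exact Finset.card_le_one.mp hL1 i (spmem i hi) j (spmem j hj)
      · have h1 := Finset.pred_card_le_card_erase (s := T) (a := a + P.δ)
        have h3 : c + 2 ≤ (T.erase (a + P.δ)).card := by omega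
        calc k + e ≤ (c + 2) * t := by rw [hk, add_mul]; omega
          _ ≤ _ := Nat.mul_le_mul_right _ h3
      · intro i hi l
        have hiT := Finset.mem_of_mem_erase hi
        have hia' := Finset.ne_of_mem_erase hi
        have hia : i ≠ a := fun h => haT (h ▸ hiT)
        have hk1 := key i hiT hia l
        rw [eval_add, eval_mul, eval_C]
        by_cases hs : sp i
        · have hz : P.Z.eval (v i l) = 0 := by
            rw [P.eval_Z]
            exact ⟨_, by simp only [v, hia', hs, if_false, if_true]; rfl⟩
          rw [eval_mul, hz] at hk1 ⊢
          simpa using hk1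
        · have hy : yy i = P.y a := by
            simp only [yy]
            rw [if_pos]
            refine ⟨hia', ?_, ?_, ?_⟩
            · intro hiL
              apply hs
              have : (L.erase (i + P.δ)).card ≤ 1 :=
                (Finset.card_le_card (Finset.erase_subset _ _)).trans hL1
              exact Finset.eq_singleton_iff_unique_mem.mpr
                ⟨hiL, fun j hj => Finset.card_le_one.mp this j hj i hiL⟩
            · exact fun h => haL (Finset.mem_of_mem_erase h)
            · exact (Finset.card_le_card (Finset.erase_subset _ _)).trans hL1
          rwa [hy] at hk1
    exact P.mix_eq_zero _ _ _ hD1 hF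
  by_cases hL2 : L.card = 2
  · let L' := L.image (fun i => i + P.δ)
    have hL' : L'.card ≤ 2 := by
      rw [← hL2]; exact Finset.card_image_le
    have hnot : ∀ i, i ∉ L' → i + P.δ ∉ L := by
      intro i hi hi2
      apply hi
      exact Finset.mem_image.mpr ⟨i + P.δ, hi2, hδδ i⟩
    refine vanish (T \ L') v (inj _ ?_) D1 k hD1 ?_ ?_
    · intro i hi j hj hsi hsj
      exfalso
      have h1 := hnot i (Finset.mem_sdiff.mp hi).2
      have h2 : L.erase (i + P.δ) = {i} := hsi
      rw [Finset.erase_eq_of_notMem h1] at h2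
      rw [h2] at hL2
      simp at hL2
    · have h1 := Finset.le_card_sdiff L' T
      have h3 : c + 1 ≤ (T \ L').card := by omega
      calc k ≤ (c + 1) * t := by rw [hk, add_mul]; omega
        _ ≤ _ := Nat.mul_le_mul_right _ h3
    · intro i hi l
      have hiT := (Finset.mem_sdiff.mp hi).1
      have h1 := hnot i (Finset.mem_sdiff.mp hi).2
      have hia : i ≠ a := fun h => haT (h ▸ hiT)
      have := key i hiT hia l
      have hy : yy i = 0 := by
        simp only [yy]
        rw [if_neg]
        rintro ⟨-, -, -, h2⟩
        rw [Finset.erase_eq_of_notMem h1] at h2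
        omega
      simpa [hy] using this
  · apply pure
    intro i hi hia l
    have : yy i = 0 := by
      simp only [yy]
      rw [if_neg]
      rintro ⟨-, -, -, h2⟩
      have := Finset.pred_card_le_card_erase (s := L) (a := i + P.δ)
      omega
    rw [this, zero_mul]

lemma caseA (c : ℕ) (hk : k = c * t + e) (he : 0 < e) (M L T : Finset G) (hM : M.card ≤ 1)
    (hT : T.card = c + 3) (D0 D1 : F[X]) (hD1 : D1.degree < (k : WithBot ℕ))
    (h : ∀ i ∈ T, ∀ l, P.core i (M.erase (i + P.δ)) (L.erase (i + P.δ)) D0 D1 l = 0) :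
    D1 = 0 := by
  rcases Nat.le_one_iff_eq_zero_or_eq_one.mp hM with h0 | h1
  · rw [Finset.card_eq_zero] at h0
    subst h0
    refine vanish T P.p (fun i _ j _ l l' => P.hpp i j l l') D1 k hD1 ?_ ?_
    · have := P.het
      rw [hT, hk, add_mul]; omega
    · intro i hi l
      simpa [core] using h i hi l
  · obtain ⟨a, rfl⟩ := Finset.card_eq_one.mp h1
    exact P.caseA1 c hk he a L T hT D0 D1 hD1 h

lemma caseB (c : ℕ) (hk : k = c * t + e) (M L T : Finset G) (hM : 2 ≤ M.card)
    (hL : L.card ≤ 1)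
    (hT : T.card = c + 3) (D0 D1 : F[X]) (hD0 : D0.degree < (k : WithBot ℕ))
    (h : ∀ i ∈ T, ∀ l, P.core i (M.erase (i + P.δ)) (L.erase (i + P.δ)) D0 D1 l = 0) :
    D0 = 0 := by
  have het := P.het
  have hδδ : ∀ i : G, i + P.δ + P.δ = i := fun i => by rw [add_assoc, P.hδ, add_zero]
  have hne : ∀ i : G, i + P.δ ≠ i := fun i hi => P.hδ0 (by simpa using hi)
  have hzz : ∀ l l', P.zt l = P.zt l' → l = l' := by
    intro l l' hl
    have := P.hzz _ _ hl
    simpa [Fin.ext_iff] using this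
  have hTL : c + 2 ≤ (T \ L).card := by
    have := Finset.le_card_sdiff L T
    omega
  have hkt : k ≤ (c + 1) * t := by rw [hk, add_mul]; omega
  -- servers that see two missing
  have see2 : ∀ i ∈ T, i ∉ L → 2 ≤ (M.erase (i + P.δ)).card → ∀ l, D0.eval (P.p i l) = 0 := by
    intro i hi hiL h2 l
    have hh := h i hi l
    have hne' : M.erase (i + P.δ) ≠ {i} := by
      intro h3; rw [h3] at h2; simp at h2
    have hne2 : M.erase (i + P.δ) ≠ ∅ := by
      intro h3; rw [h3] at h2; simp at h2
    have hne3 : (M.erase (i + P.δ)).card ≠ 1 := by omega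
    have hN : i ∉ L.erase (i + P.δ) := fun h => hiL (Finset.mem_of_mem_erase h)
    simp only [core, hne', hne2, hne3, hN, if_false] at hh
    split_ifs at hh <;> exact hh
  by_cases hM3 : 3 ≤ M.card
  · refine vanish (T \ L) P.p (fun i _ j _ l l' => P.hpp i j l l') D0 k hD0 ?_ ?_
    · exact hkt.trans (Nat.mul_le_mul_right _ (by omega))
    · intro i hi
      apply see2 i (Finset.mem_sdiff.mp hi).1 (Finset.mem_sdiff.mp hi).2
      have := Finset.pred_card_le_card_erase (s := M) (a := i + P.δ)
      omega
  have hM2 : M.card = 2 := by omega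
  obtain ⟨a, b, hab, rfl⟩ := Finset.card_eq_two.mp hM2
  by_cases hba : b = a + P.δ
  · -- antipodal
    refine vanish ((T \ L).erase b) (fun i l => if i = a then P.zt l else P.p i l)
      ?_ D0 k hD0 ?_ ?_
    · intro i hi j hj l l' hv
      split_ifs at hv with h1 h2 h2
      · exact ⟨h1.trans h2.symm, hzz _ _ hv⟩
      · exact absurd hv.symm (P.hpz _ _ _)
      · exact absurd hv (P.hpz _ _ _)
      · exact P.hpp _ _ _ _ hv
    · have := Finset.pred_card_le_card_erase (s := T \ L) (a := b)
      exact hkt.trans (Nat.mul_le_mul_right _ (by omega))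
    · intro i hi l
      have hib := Finset.ne_of_mem_erase hi
      have hi1 := Finset.mem_sdiff.mp (Finset.mem_of_mem_erase hi)
      by_cases hia : i = a
      · subst hia
        have hh := h i hi1.1 l
        have h1 : Finset.erase {i, b} (i + P.δ) = ({i} : Finset G) := by
          rw [← hba]; ext x; simp; grind
        rw [h1] at hh
        simpa [core, hi1.2] using hh
      · simp only [hia, if_false]
        apply see2 i hi1.1 hi1.2
        rw [Finset.erase_eq_of_notMem]
        · omega
        · simp only [Finset.mem_insert, Finset.mem_singleton, not_or]
          constructor
          · intro h1; apply hib; rw [hba, ← h1, hδδ]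
          · intro h1; apply hia; rw [hba] at h1; exact add_right_cancel h1
  · let V := ((T \ L).erase (a + P.δ)).erase (b + P.δ)
    have hV : ∀ i ∈ V, ∀ l, D0.eval (P.p i l) = 0 := by
      intro i hi
      have h1 := Finset.ne_of_mem_erase hi
      have hi2 := Finset.mem_of_mem_erase hi
      have h2 := Finset.ne_of_mem_erase hi2
      have h3 := Finset.mem_sdiff.mp (Finset.mem_of_mem_erase hi2)
      apply see2 i h3.1 h3.2
      rw [Finset.erase_eq_of_notMem]
      · omega
      · simp only [Finset.mem_insert, Finset.mem_singleton, not_or]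
        constructor
        · intro h4; apply h2; rw [← h4, hδδ]
        · intro h4; apply h1; rw [← h4, hδδ]
    by_cases hVc : c + 1 ≤ V.card
    · exact vanish V P.p (fun i _ j _ l l' => P.hpp i j l l') D0 k hD0
        (hkt.trans (Nat.mul_le_mul_right _ hVc)) hV
    have e1 := Finset.pred_card_le_card_erase (s := T \ L) (a := a + P.δ)
    have e2 := Finset.pred_card_le_card_erase (s := (T \ L).erase (a + P.δ)) (a := b + P.δ)
    have hVc2 : c ≤ V.card := by
      have : ((T \ L).erase (a + P.δ)).card - 1 ≤ V.card := e2
      omega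
    have ha' : a + P.δ ∈ T \ L := by
      by_contra hcon
      rw [Finset.erase_eq_of_notMem hcon] at e2
      have : (T \ L).card - 1 ≤ V.card := by
        simp only [V]; rw [Finset.erase_eq_of_notMem hcon]; exact e2
      omega
    have hb' : b + P.δ ∈ T \ L := by
      by_contra hcon
      have h1 : b + P.δ ∉ (T \ L).erase (a + P.δ) := fun h => hcon (Finset.mem_of_mem_erase h)
      have : (T \ L).card - 1 ≤ V.card := by
        simp only [V]; rw [Finset.erase_eq_of_notMem h1]; exact e1
      omega
    rw [Finset.mem_sdiff] at ha' hb'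
    have gen : ∀ a b : G, a ≠ b → b ≠ a + P.δ → a + P.δ ∈ T → a + P.δ ∉ L →
        (∀ l, P.core (a + P.δ) (Finset.erase {a, b} a) (L.erase a) D0 D1 l = 0) →
        ∀ l, D1.eval (P.q (a + b + P.δ) l) +
          (if b ∈ L then 0 else P.y b) * (P.Z * P.R D0).eval (P.q (a + b + P.δ) l) = 0 := by
      intro a b hab hba haT haL hh l
      have hh := hh l
      have h1 : Finset.erase {a, b} a = ({b} : Finset G) := by
        ext x; simp; grind
      have h2 : a + P.δ ∉ L.erase a := fun h => haL (Finset.mem_of_mem_erase h)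
      have h3 : L.erase a ≠ {a + P.δ} := by
        intro h3; apply h2; rw [h3]; simp
      have h4 : (L.erase a).card ≤ 1 :=
        (Finset.card_le_card (Finset.erase_subset _ _)).trans hL
      have h5 : b ∈ L.erase a ↔ b ∈ L := by simp [hab.symm]
      have h6 : a + P.δ + b = a + b + P.δ := by abel
      have h7 : a + P.δ ∉ ({b} : Finset G) := by simpa using fun h => hba h.symm
      rw [h1] at hh
      simp only [core, h7, Finset.singleton_ne_empty, h2, h3, h4, h5, if_false,
        Finset.card_singleton, if_true, Finset.sum_singleton, h6, not_false_eq_true, true_and,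
        and_true] at hh
      by_cases hbL : b ∈ L <;> simpa [hbL] using hh
    have g1 := gen a b hab hba ha'.1 ha'.2 (by
      have := h _ ha'.1
      rwa [hδδ] at this)
    have g2 := gen b a hab.symm (by
        intro h1; apply hba; rw [h1, hδδ]) hb'.1 hb'.2 (by
      have := h _ hb'.1
      rw [hδδ] at this
      rwa [Finset.pair_comm])
    have hR : P.R D0 = 0 := by
      refine eq_zero_of_degree_lt_of_eval_index_eq_zero (v := P.q (a + b + P.δ))
        Finset.univ ?_ ?_ ?_
      · intro l _ l' _ hl
        exact (P.hqq _ _ _ _ hl).2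
      · refine lt_of_lt_of_le (P.degree_R D0) ?_
        simp only [Finset.card_univ, Fintype.card_fin]
        exact_mod_cast het
      · intro l _
        have h1 := g1 l
        have h2 := g2 l
        rw [add_comm b a] at h2
        have h3 : ((if b ∈ L then 0 else P.y b) - (if a ∈ L then 0 else P.y a)) *
            (P.Z * P.R D0).eval (P.q (a + b + P.δ) l) = 0 := by
          linear_combination h1 - h2
        have h4 : (if b ∈ L then 0 else P.y b) - (if a ∈ L then 0 else P.y a) ≠ 0 := by
          rw [sub_ne_zero]
          split_ifs with hb ha ha
          · exact absurd (Finset.card_le_one.mp hL a ha b hb) hab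
          · exact (P.hy0 _).symm
          · exact P.hy0 _
          · exact fun h => hab (P.hyy _ _ h).symm
        rcases mul_eq_zero.mp h3 with h5 | h5
        · exact absurd h5 h4
        rw [eval_mul] at h5
        rcases mul_eq_zero.mp h5 with h6 | h6
        · obtain ⟨l', hl'⟩ := (P.eval_Z _).mp h6
          exact absurd hl' (P.hqz _ _ _)
        · exact h6
    refine eq_zero_of_degree_lt_of_eval_index_eq_zero
      (v := Sum.elim (fun x : G × Fin t => P.p x.1 x.2) P.ze)
      ((V ×ˢ (Finset.univ : Finset (Fin t))).disjSum (Finset.univ : Finset (Fin e))) ?_ ?_ ?_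
    · rintro (⟨i, l⟩ | l) _ (⟨j, l'⟩ | l') _ hv
      · simp only [Sum.elim_inl] at hv
        have := P.hpp _ _ _ _ hv
        simp [this.1, this.2]
      · exact absurd hv (P.hpz _ _ _)
      · exact absurd hv.symm (P.hpz _ _ _)
      · have := P.hzz _ _ hv
        simpa [Fin.ext_iff] using this
    · refine lt_of_lt_of_le hD0 ?_
      simp only [Finset.card_disjSum, Finset.card_product, Finset.card_univ, Fintype.card_fin]
      have : k ≤ V.card * t + e := by
        rw [hk]; exact Nat.add_le_add_right (Nat.mul_le_mul_right _ hVc2) _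
      exact_mod_cast this
    · rintro (⟨i, l⟩ | l) hx
      · simp only [Finset.inl_mem_disjSum, Finset.mem_product] at hx
        exact hV i hx.1 l
      · simp only [Sum.elim_inr]
        rw [← P.eval_R, hR, eval_zero]

end Setup

lemma mem_nbhd_iff (n : ℕ) [NeZero n] (hn : 4 ≤ n) (heven : Even n) (i j : ZMod n) :
    j ∈ nbhd n (n / 2 - 1) i ↔ j ≠ i + ((n / 2 : ℕ) : ZMod n) := by
  obtain ⟨m, hm⟩ := heven
  have hm2 : n / 2 = m := by omega
  rw [hm2]
  unfold nbhd
  simp only [Finset.mem_image, Finset.mem_Icc]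
  constructor
  · rintro ⟨d, ⟨h1, h2⟩, rfl⟩ h
    have h3 : ((d : ℤ) : ZMod n) = ((m : ℤ) : ZMod n) := by
      have := add_left_cancel h
      rw [this]; simp
    rw [ZMod.intCast_eq_intCast_iff_dvd_sub] at h3
    obtain ⟨x, hx⟩ := h3
    have h4 : (m : ℤ) - d < n * 1 := by omega
    have h5 : (n : ℤ) * 0 < m - d := by omega
    rw [hx] at h4 h5
    have hn0 : (0 : ℤ) < n := by omega
    have := lt_of_mul_lt_mul_left h4 hn0.le
    have := lt_of_mul_lt_mul_left h5 hn0.le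
    omega
  · intro h
    have hv := ZMod.val_lt (j - i)
    have hcast : (((j - i).val : ℕ) : ZMod n) = j - i := by simp
    have hvm : (j - i).val ≠ m := by
      intro h1
      apply h
      rw [← h1, hcast]; ring
    by_cases hlt : (j - i).val < m
    · refine ⟨((j - i).val : ℤ), by omega, ?_⟩
      rw [Int.cast_natCast, hcast]; ring
    · refine ⟨((j - i).val : ℤ) - n, by omega, ?_⟩
      rw [Int.cast_sub, Int.cast_natCast, Int.cast_natCast, hcast]
      simp

/-- The set of servers lacking version `u`. -/
def lacking (n : ℕ) [NeZero n] (S : ZMod n → Finset (Fin 2)) (u : Fin 2) : Finset (ZMod n) :=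
  Finset.univ.filter (fun j => u ∉ S j)

lemma lacking_card (n : ℕ) [NeZero n] (S : ZMod n → Finset (Fin 2)) (u : Fin 2) :
    (received n 2 S u).card + (lacking n S u).card = n := by
  unfold received lacking
  rw [Finset.card_filter_add_card_filter_not]
  simp [ZMod.card]

open Classical in
lemma build (n : ℕ) [NeZero n] (hn : 4 ≤ n) (heven : Even n) (F : Type) [Field F]
    (t k e c K q : ℕ) (hk : k = c * t + e) (he : 0 < e) (P : Setup (ZMod n) F t k e)
    (hδ : P.δ = ((n / 2 : ℕ) : ZMod n)) (α : (Fin K → Bool) ↪ degreeLT F k)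
    (β : (Fin t → F) ↪ Fin q) :
    Nonempty (MVCode n (n - 1) (c + 3) 2 (n / 2 - 1) K q) := by
  let enc : ZMod n → (ZMod n → Finset (Fin 2)) → (Fin 2 → (Fin K → Bool)) → Fin q :=
    fun i S W => β (P.core i ((lacking n S 1).erase (i + P.δ)) ((lacking n S 0).erase (i + P.δ))
      (α (W 0) : F[X]) (α (W 1) : F[X]))
  let tgt : (ZMod n → Finset (Fin 2)) → Fin 2 := fun S =>
    if n - 1 ≤ (received n 2 S 1).card then 1 else 0
  let dec' : (S : ZMod n → Finset (Fin 2)) → (T : Finset (ZMod n)) → (T → Fin q) →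
      Option (Fin K → Bool) := fun S T Y =>
    if ∃ u : Fin 2, n - 1 ≤ (received n 2 S u).card then
      (if h : ∃ W, ∀ j : T, enc j S W = Y j then some (h.choose (tgt S)) else none)
    else none
  have hne : ∀ i : ZMod n, i ≠ i + P.δ := fun i hi => P.hδ0 (by simpa using hi.symm)
  have main : ∀ (S : ZMod n → Finset (Fin 2)) (T : Finset (ZMod n)) (W W' : Fin 2 → Fin K → Bool),
      T.card = c + 3 → (∃ u : Fin 2, n - 1 ≤ (received n 2 S u).card) →
      (∀ j ∈ T, enc j S W = enc j S W') → W (tgt S) = W' (tgt S) := by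
    intro S T W W' hT hu hW
    have hcore : ∀ i ∈ T, ∀ l, P.core i ((lacking n S 1).erase (i + P.δ))
        ((lacking n S 0).erase (i + P.δ)) ((α (W 0) : F[X]) - α (W' 0))
        ((α (W 1) : F[X]) - α (W' 1)) l = 0 := by
      intro i hi l
      rw [P.core_sub, sub_eq_zero]
      exact congrFun (β.injective (hW i hi)) l
    have hdeg : ∀ u, ((α (W u) : F[X]) - α (W' u)).degree < (k : WithBot ℕ) := by
      intro u
      rw [← Polynomial.mem_degreeLT]
      exact Submodule.sub_mem _ (α (W u)).2 (α (W' u)).2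
    have fin : ∀ u, (α (W u) : F[X]) - α (W' u) = 0 → W u = W' u := by
      intro u h
      exact α.injective (Subtype.ext (sub_eq_zero.mp h))
    have c1 := lacking_card n S 1
    have c0 := lacking_card n S 0
    by_cases h1 : n - 1 ≤ (received n 2 S 1).card
    · simp only [tgt, h1, if_true]
      exact fin 1 (P.caseA c hk he _ _ T (by omega) hT _ _ (hdeg 1) hcore)
    · simp only [tgt, h1, if_false]
      have h0 : n - 1 ≤ (received n 2 S 0).card := by
        obtain ⟨u, hu⟩ := hu
        fin_cases u
        · exact hu
        · exact absurd hu h1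
      exact fin 0 (P.caseB c hk _ _ T (by omega) (by omega) hT _ _ (hdeg 0) hcore)
  refine ⟨⟨enc, fun S T X => dec' S T (fun j => X j), ?_, ?_, ?_, ?_, ?_⟩⟩
  · intro i S S' W h
    have hl : ∀ u, (lacking n S u).erase (i + P.δ) = (lacking n S' u).erase (i + P.δ) := by
      intro u
      ext j
      simp only [Finset.mem_erase, lacking, Finset.mem_filter, Finset.mem_univ, true_and]
      refine and_congr_right fun hj => ?_
      rw [h j ((mem_nbhd_iff n hn heven i j).mpr (by rwa [← hδ]))]
    simp only [enc, hl]
  · intro i S W W' h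
    simp only [enc]
    congr 1
    funext l
    have hl : ∀ u, i ∉ (lacking n S u).erase (i + P.δ) → (α (W u) : F[X]) = α (W' u) := by
      intro u hu
      rw [h u]
      by_contra hcon
      apply hu
      simp only [Finset.mem_erase, lacking, Finset.mem_filter, Finset.mem_univ, true_and]
      exact ⟨hne i, hcon⟩
    exact P.core_congr _ _ _ _ _ _ _ _ (hl 0) (hl 1)
  · intro S T X X' h
    have : (fun j : T => X j) = (fun j : T => X' j) := funext fun j => h j j.2
    simp only [this]
  · intro S W T hT hu
    refine ⟨tgt S, ?_, ?_⟩
    · intro u hu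
      simp only [tgt]
      split_ifs with h1
      · exact Fin.le_last u
      · fin_cases u
        · exact le_refl _
        · exact absurd hu h1
    · have hex : ∃ W', ∀ j : T, enc j S W' = enc j S W := ⟨W, fun _ => rfl⟩
      simp only [dec']
      rw [if_pos hu, dif_pos hex]
      congr 1
      exact main S T _ W hT hu fun j hj => hex.choose_spec ⟨j, hj⟩
  · intro S W T hT hu
    simp only [dec']
    rw [if_neg]
    rintro ⟨u, h⟩
    exact absurd (hu u) (by omega)

lemma setup_exists (G F : Type) [AddCommGroup G] [Fintype G] [Field F] [Fintype F] (t k e : ℕ)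
    (δ : G) (hδ : δ + δ = 0) (hδ0 : δ ≠ 0) (htk : t ≤ k) (het : e ≤ t)
    (hc : 2 * (Fintype.card G * t) + k + Fintype.card G + 1 ≤ Fintype.card F) :
    ∃ P : Setup G F t k e, P.δ = δ := by
  obtain ⟨pt⟩ : Nonempty (((G × Fin t) ⊕ ((G × Fin t) ⊕ Fin k)) ↪ F) := by
    apply Function.Embedding.nonempty_of_card_le
    simp only [Fintype.card_sum, Fintype.card_prod, Fintype.card_fin]
    omega
  obtain ⟨y⟩ : Nonempty (Option G ↪ F) := by
    apply Function.Embedding.nonempty_of_card_le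
    simp only [Fintype.card_option]
    omega
  refine ⟨{ p := fun i l => pt (Sum.inl (i, l)), q := fun i l => pt (Sum.inr (Sum.inl (i, l))),
            z := fun l => pt (Sum.inr (Sum.inr l)), y := fun i => y (some i) - y none, δ := δ,
            hδ := hδ, hδ0 := hδ0, htk := htk, het := het, hpp := ?_, hqq := ?_, hzz := ?_,
            hpq := ?_, hpz := ?_, hqz := ?_, hy0 := ?_, hyy := ?_ }, rfl⟩
  · intro i j l l' h; simpa using h
  · intro i j l l' h; simpa using h
  · intro l l' h; simpa using h
  · intro i j l l' h; simp at h
  · intro i l l' h; simp at h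
  · intro i l l' h; simp at h
  · intro i h; simp [sub_eq_zero] at h
  · intro i j h; simpa using h

/-- Construction 1: for `n ≥ 4` even, `ν = 2`, `c_W = n-1`,
`h = n/2 - 1`, `2 ≤ c_R ≤ n-1` and `c := c_R - 1 ≥ 2`, there is `K₀` such that for all
`K ≥ K₀` with `c² ∣ (c+2)K` there exists an `(n, n-1, c_R, 2, n/2-1, 2^K, q)`
multi-version code with side information with storage cost `log₂ q = (c+2)K/c²`. -/
theorem construction_one (n cR c : ℕ) [NeZero n] (hn : 4 ≤ n) (heven : Even n)
    (hcR2 : 2 ≤ cR) (hcRn : cR ≤ n - 1) (hc : c = cR - 1) (hc2 : 2 ≤ c) :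
    ∃ K0 : ℕ, ∀ K : ℕ, K0 ≤ K → c ^ 2 ∣ (c + 2) * K →
      Nonempty (MVCode n (n - 1) cR 2 (n / 2 - 1) K (2 ^ ((c + 2) * K / c ^ 2))) := by
  obtain ⟨c0, rfl⟩ : ∃ c0, c = c0 + 2 := ⟨c - 2, by omega⟩
  obtain rfl : cR = c0 + 3 := by omega
  set g := Nat.gcd ((c0 + 2) ^ 2) (c0 + 2 + 2) with hg
  have hgpos : 0 < g := Nat.gcd_pos_of_pos_right _ (by omega)
  obtain ⟨k, hk⟩ : g ∣ (c0 + 2) ^ 2 := Nat.gcd_dvd_left _ _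
  obtain ⟨t, ht⟩ : g ∣ c0 + 2 + 2 := Nat.gcd_dvd_right _ _
  have hcop : Nat.Coprime k t := by
    have h1 := Nat.coprime_div_gcd_div_gcd (m := (c0 + 2) ^ 2) (n := c0 + 2 + 2) hgpos
    rw [← hg] at h1
    rwa [hk, ht, Nat.mul_div_cancel_left _ hgpos, Nat.mul_div_cancel_left _ hgpos] at h1
  have h4 : (c0 + 2) ^ 2 = c0 * (c0 + 2 + 2) + 4 := by ring
  obtain ⟨e, he⟩ : g ∣ 4 := by
    refine (Nat.dvd_add_right (a := g) (b := c0 * (c0 + 2 + 2)) ?_).mp ?_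
    · exact Dvd.dvd.mul_left ⟨t, ht⟩ _
    · rw [← h4]; exact ⟨k, hk⟩
  have hkte : k = c0 * t + e := by
    apply Nat.eq_of_mul_eq_mul_left hgpos
    rw [← hk, h4, ht, he]; ring
  have hepos : 0 < e := by
    rcases Nat.eq_zero_or_pos e with h | h
    · rw [h] at he; omega
    · exact h
  have het : e ≤ t := by
    apply Nat.le_of_mul_le_mul_left _ hgpos
    rw [← he, ← ht]; omega
  have htk : t ≤ k := by
    rcases Nat.eq_zero_or_pos c0 with h | h
    · subst h
      have : g * t = g * e := by rw [← he, ← ht]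
      have := Nat.eq_of_mul_eq_mul_left hgpos this
      omega
    · have := Nat.le_mul_of_pos_left t h
      omega
  have hkpos : 0 < k := by omega
  refine ⟨k * (2 * (n * t) + k + n + 1), fun K hK hdvd => ?_⟩
  have hkK : k ∣ K := by
    rw [hk, ht, mul_assoc] at hdvd
    exact hcop.dvd_of_dvd_mul_left (Nat.dvd_of_mul_dvd_mul_left hgpos hdvd)
  obtain ⟨u, rfl⟩ := hkK
  have hu : 2 * (n * t) + k + n + 1 ≤ u := Nat.le_of_mul_le_mul_left hK hkpos
  have hexp : (c0 + 2 + 2) * (k * u) / (c0 + 2) ^ 2 = t * u := by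
    rw [hk, ht, show g * t * (k * u) = g * k * (t * u) by ring]
    exact Nat.mul_div_cancel_left _ (Nat.mul_pos hgpos hkpos)
  rw [hexp]
  haveI : Fact (Nat.Prime 2) := ⟨Nat.prime_two⟩
  let F := GaloisField 2 u
  letI : Fintype F := Fintype.ofFinite F
  have hF : Fintype.card F = 2 ^ u := by
    rw [← Nat.card_eq_fintype_card]
    exact GaloisField.card 2 u (by omega)
  have hδ : ((n / 2 : ℕ) : ZMod n) + ((n / 2 : ℕ) : ZMod n) = 0 := by
    obtain ⟨m, hm⟩ := heven
    rw [← Nat.cast_add, show n / 2 + n / 2 = n by omega]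
    simp
  have hδ0 : ((n / 2 : ℕ) : ZMod n) ≠ 0 := by
    rw [Ne, ZMod.natCast_eq_zero_iff]
    intro h
    have := Nat.le_of_dvd (by omega) h
    omega
  obtain ⟨P, hP⟩ := setup_exists (ZMod n) F t k e _ hδ hδ0 htk het (by
    rw [ZMod.card, hF]
    exact hu.trans (Nat.lt_two_pow_self).le)
  obtain ⟨α⟩ : Nonempty ((Fin (k * u) → Bool) ↪ (Fin k → F)) := by
    apply Function.Embedding.nonempty_of_card_le
    rw [Fintype.card_fun, Fintype.card_fun, hF, Fintype.card_bool, Fintype.card_fin,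
      Fintype.card_fin, ← pow_mul, mul_comm]
  obtain ⟨β⟩ : Nonempty ((Fin t → F) ↪ Fin (2 ^ (t * u))) := by
    apply Function.Embedding.nonempty_of_card_le
    rw [Fintype.card_fun, hF, Fintype.card_fin, Fintype.card_fin, ← pow_mul, mul_comm]
  exact build n hn heven F t k e c0 _ _ hkte hepos P hP
    (α.trans (degreeLTEquiv F k).symm.toEquiv.toEmbedding) β
end

section
/- Let n ≥ 6 be even, ν = 2, c_W = n−1, h = n/2 − 1, and let c_R be an integer with c_R ≤ n−1; set c := c_W + c_R − n = c_R − 1 and assume c ≥ 2. Then every (n, n−1, c_R, 2, n/2−1, 2^K, q) multi-version code with side information (for two independent K-bit versions) satisfies q^{2c−1} ≥ 2^{2K}, i.e., its storage cost satisfies log₂ q ≥ 2K/(2c−1). -/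
open Finset

lemma comb_core {W Z : Type} [Fintype W] [DecidableEq W] [Fintype Z] (q R M : ℕ)
    (f : W → Fin q) (β : W → W → Fin q) (z : W → W → Z) (v : Fin q → Fin q → Z → W)
    (D : Fin q → Finset W)
    (hv : ∀ w1 w2, v (f w1) (β w1 w2) (z w1 w2) = w1 ∨ v (f w1) (β w1 w2) (z w1 w2) = w2)
    (hD : ∀ w1 w2, w2 ∈ D (β w1 w2))
    (hDc : ∀ b, (D b).card ≤ q * R) (hR : Fintype.card Z = R) (hM : Fintype.card W = M)
    (hMpos : 0 < M) :
    ∃ m o k : ℕ, M ≤ q * m ∧ k * m + o ≤ q * R ∧ k ≤ q ∧ M ≤ k * (q * R) + (q - k) * R ∧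
      M ≤ k * (q * R) + (m + o) ∧
      (∀ r : ℕ, r * R < m → (r + 1) * M ≤ q * (q * R) + r * (m + o)) := by
  classical
  -- a large class
  obtain ⟨φ, hφ⟩ : ∃ φ : Fin q, M ≤ q * (univ.filter (fun w => f w = φ)).card := by
    by_contra hcon
    push Not at hcon
    have h1 : M = ∑ φ : Fin q, (univ.filter (fun w => f w = φ)).card := by
      rw [← hM, ← Finset.card_univ]
      exact Finset.card_eq_sum_card_fiberwise (fun _ _ => by simp)
    have hq : 0 < q := by
      have : Nonempty W := Fintype.card_pos_iff.mp (hM ▸ hMpos)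
      exact Fin.pos (f this.some)
    have h2 : q * M < q * M := by
      calc q * M = ∑ φ : Fin q, q * (univ.filter (fun w => f w = φ)).card := by
            rw [← Finset.mul_sum, ← h1]
        _ < ∑ φ : Fin q, M := Finset.sum_lt_sum_of_nonempty
            ⟨⟨0, hq⟩, mem_univ _⟩ (fun i _ => hcon i)
        _ = q * M := by simp
    exact lt_irrefl _ h2
  set C := univ.filter (fun w => f w = φ) with hC
  have memC : ∀ w, w ∈ C ↔ f w = φ := by simp [hC]
  let V : Fin q × Z → W := fun p => v φ p.1 p.2
  let good : W → Finset (Fin q) := fun w => univ.filter (fun b => ∃ y, v φ b y = w)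
  have memgood : ∀ w b, b ∈ good w ↔ ∃ y, v φ b y = w := by simp [good]
  let Osl : Finset (Fin q × Z) := univ.filter (fun p => V p ∉ C)
  let O : Finset W := Osl.image V
  have hOc : O.card ≤ Osl.card := card_image_le
  have hCne : C.Nonempty := by
    rw [← Finset.card_pos]
    by_contra h0
    have : C.card = 0 := by omega
    rw [this] at hφ; omega
  obtain ⟨w0, hw0, hmin⟩ := Finset.exists_min_image C (fun w => (good w).card) hCne
  have hbad : ∀ w1 ∈ C, ∀ w2, β w1 w2 ∉ good w1 → v φ (β w1 w2) (z w1 w2) = w2 := by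
    intro w1 h1 w2 hb
    have := hv w1 w2
    rw [(memC w1).1 h1] at this
    rcases this with h | h
    · exact absurd ((memgood _ _).2 ⟨_, h⟩) hb
    · exact h
  -- slots
  have hslots : ∑ w ∈ C, (good w).card + Osl.card ≤ q * R := by
    have h1 : ∑ w ∈ C, (good w).card ≤ ∑ w ∈ C, (univ.filter (fun p : Fin q × Z => V p = w)).card := by
      apply Finset.sum_le_sum
      intro w _
      have : good w ⊆ (univ.filter (fun p : Fin q × Z => V p = w)).image Prod.fst := by
        intro b hb
        obtain ⟨y, hy⟩ := (memgood _ _).1 hb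
        exact mem_image.2 ⟨(b, y), by simpa [V] using hy, rfl⟩
      exact (card_le_card this).trans card_image_le
    have h2 : ∑ w ∈ C, (univ.filter (fun p : Fin q × Z => V p = w)).card
        = (univ.filter (fun p : Fin q × Z => V p ∈ C)).card := by
      rw [Finset.card_eq_sum_card_fiberwise (f := V) (t := C)]
      · apply Finset.sum_congr rfl
        intro w hw
        congr 1
        ext p
        simp only [mem_filter, mem_univ, true_and]
        constructor
        · intro h; exact ⟨h ▸ hw, h⟩
        · intro h; exact h.2
      · intro p hp; simpa using hp
    have h3 := Finset.card_filter_add_card_filter_not (s := (univ : Finset (Fin q × Z))) (fun p => V p ∈ C)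
    simp only [Finset.card_univ, Fintype.card_prod, Fintype.card_fin, hR] at h3
    calc _ ≤ (univ.filter (fun p : Fin q × Z => V p ∈ C)).card + Osl.card := by omega
      _ = q * R := h3
  have hkm : (good w0).card * C.card + Osl.card ≤ q * R := by
    have : (good w0).card * C.card ≤ ∑ w ∈ C, (good w).card := by
      rw [mul_comm]
      simpa using Finset.card_nsmul_le_sum C (fun w => (good w).card) _ hmin
    omega
  have hgoodU : ((good w0).biUnion D).card ≤ (good w0).card * (q * R) :=
    Finset.card_biUnion_le_card_mul _ _ _ (fun b _ => hDc b)
  refine ⟨C.card, Osl.card, (good w0).card, hφ, hkm, ?_, ?_, ?_, ?_⟩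
  · simpa using Finset.card_le_univ (good w0)
  · have hsub : (univ : Finset W) ⊆ (good w0).biUnion D ∪
        (((good w0)ᶜ ×ˢ (univ : Finset Z)).image V) := by
      intro w2 _
      by_cases hb : β w0 w2 ∈ good w0
      · exact mem_union_left _ (mem_biUnion.2 ⟨_, hb, hD _ _⟩)
      · exact mem_union_right _ (mem_image.2 ⟨(β w0 w2, z w0 w2), by simpa using hb,
          hbad w0 hw0 w2 hb⟩)
    have h1 := card_le_card hsub
    have h2 := card_union_le ((good w0).biUnion D) (((good w0)ᶜ ×ˢ (univ : Finset Z)).image V)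
    have h3 : (((good w0)ᶜ ×ˢ (univ : Finset Z)).image V).card ≤ (q - (good w0).card) * R := by
      refine card_image_le.trans ?_
      rw [card_product, card_compl, Fintype.card_fin, Finset.card_univ, hR]
    rw [Finset.card_univ, hM] at h1
    omega
  · have hsub : (univ : Finset W) ⊆ (good w0).biUnion D ∪ (C ∪ O) := by
      intro w2 _
      by_cases hb : β w0 w2 ∈ good w0
      · exact mem_union_left _ (mem_biUnion.2 ⟨_, hb, hD _ _⟩)
      · apply mem_union_right
        by_cases hc : w2 ∈ C
        · exact mem_union_left _ hc
        · apply mem_union_right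
          have := hbad w0 hw0 w2 hb
          exact mem_image.2 ⟨(β w0 w2, z w0 w2), by simpa [Osl, V, this] using hc, this⟩
    have h1 := card_le_card hsub
    have h2 := card_union_le ((good w0).biUnion D) (C ∪ O)
    have h3 := card_union_le C O
    rw [Finset.card_univ, hM] at h1
    omega
  · intro r hr
    let δ : W → ℕ := fun w2 => (univ.filter (fun b => w2 ∈ D b)).card
    have hsum : ∑ w2, δ w2 ≤ q * (q * R) := by
      have : ∑ w2, δ w2 = ∑ b, (D b).card := by
        have := Finset.sum_card_bipartiteAbove_eq_sum_card_bipartiteBelow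
          (s := (univ : Finset W)) (t := (univ : Finset (Fin q))) (fun w b => w ∈ D b)
        simpa [Finset.bipartiteAbove, Finset.bipartiteBelow, δ] using this
      rw [this]
      calc _ ≤ ∑ b : Fin q, q * R := Finset.sum_le_sum (fun b _ => hDc b)
        _ = _ := by simp
    have hδ1 : ∀ w2, 1 ≤ δ w2 := fun w2 => Finset.card_pos.2 ⟨β w0 w2, by simpa using hD _ _⟩
    have hgb : ∀ b, (C.filter (fun w => b ∈ good w)).card ≤ R := by
      intro b
      have : C.filter (fun w => b ∈ good w) ⊆ (univ : Finset Z).image (fun y => v φ b y) := by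
        intro w hw
        obtain ⟨y, hy⟩ := (memgood _ _).1 (mem_filter.1 hw).2
        exact mem_image.2 ⟨y, mem_univ _, hy⟩
      refine (card_le_card this).trans (card_image_le.trans ?_)
      rw [Finset.card_univ, hR]
    have hδ2 : ∀ w2, w2 ∉ C ∪ O → r + 1 ≤ δ w2 := by
      intro w2 hw2
      rw [mem_union, not_or] at hw2
      have hsub : C ⊆ (univ.filter (fun b => w2 ∈ D b)).biUnion
          (fun b => C.filter (fun w => b ∈ good w)) := by
        intro w1 h1
        refine mem_biUnion.2 ⟨β w1 w2, by simpa using hD _ _, mem_filter.2 ⟨h1, ?_⟩⟩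
        by_contra hb
        have := hbad w1 h1 w2 hb
        exact hw2.2 (mem_image.2 ⟨(β w1 w2, z w1 w2), by simpa [Osl, V, this] using hw2.1, this⟩)
      have h1 : C.card ≤ δ w2 * R := (card_le_card hsub).trans
        (Finset.card_biUnion_le_card_mul _ _ _ (fun b _ => hgb b))
      have : r * R < δ w2 * R := lt_of_lt_of_le hr h1
      exact lt_of_mul_lt_mul_right this (Nat.zero_le _)
    have hpt : ∀ w2, (r + 1) ≤ δ w2 + (if w2 ∈ C ∪ O then r else 0) := by
      intro w2
      split_ifs with h
      · have := hδ1 w2; omega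
      · have := hδ2 w2 h; omega
    have h5 : (r + 1) * M ≤ ∑ w2, δ w2 + (C ∪ O).card * r := by
      have := Finset.sum_le_sum (s := (univ : Finset W)) (fun w _ => hpt w)
      rw [Finset.sum_const, Finset.sum_add_distrib, Finset.sum_ite_mem, Finset.univ_inter,
        Finset.sum_const, Finset.card_univ, hM, smul_eq_mul, smul_eq_mul] at this
      linarith
    have h6 : (C ∪ O).card ≤ C.card + Osl.card := (card_union_le _ _).trans (by omega)
    nlinarith [Nat.mul_le_mul_right r h6]

set_option maxHeartbeats 1000000 in
lemma arith_core (q R M m o k : ℕ) (hR : 0 < R) (hM : q * (q * R) ^ 2 < M ^ 2)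
    (h2 : q = 2 → 2 * (q * R) ≤ M) (hm : M ≤ q * m) (hkm : k * m + o ≤ q * R) (hkq : k ≤ q)
    (h1 : M ≤ k * (q * R) + (q - k) * R) (hII : M ≤ k * (q * R) + (m + o))
    (hIV : ∀ r : ℕ, r * R < m → (r + 1) * M ≤ q * (q * R) + r * (m + o)) : False := by
  have hq : 0 < q := by
    rcases Nat.eq_zero_or_pos q with h | h
    · subst h; simp at *; subst h1; simp at hM
    · exact h
  -- real variables
  set s : ℝ := Real.sqrt q with hs
  have hss : s * s = q := Real.mul_self_sqrt (by positivity)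
  have hs1 : 1 ≤ s := Real.one_le_sqrt.2 (by exact_mod_cast hq)
  have hRr : (0:ℝ) < R := by exact_mod_cast hR
  have hqr : (0:ℝ) < q := by exact_mod_cast hq
  obtain ⟨t, ht⟩ : ∃ t : ℝ, (M:ℝ) = t * (q * R) := ⟨M / (q * R), by field_simp⟩
  obtain ⟨μ, hμ⟩ : ∃ μ : ℝ, (m:ℝ) = μ * R := ⟨m / R, by field_simp⟩
  obtain ⟨ω, hω⟩ : ∃ ω : ℝ, (o:ℝ) = ω * R := ⟨o / R, by field_simp⟩
  have ht0 : 0 ≤ t := by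
    by_contra h
    have : (M:ℝ) < 0 := by rw [ht]; exact mul_neg_of_neg_of_pos (by linarith) (by positivity)
    linarith [(Nat.cast_nonneg M : (0:ℝ) ≤ M)]
  have hω0 : 0 ≤ ω := by
    by_contra h
    have : (o:ℝ) < 0 := by rw [hω]; exact mul_neg_of_neg_of_pos (by linarith) (by positivity)
    linarith [(Nat.cast_nonneg o : (0:ℝ) ≤ o)]
  have hts : s < t := by
    have h : (q:ℝ) * (q * R) ^ 2 < M ^ 2 := by exact_mod_cast hM
    rw [ht, mul_pow t] at h
    have := lt_of_mul_lt_mul_right h (sq_nonneg _)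
    rw [← hss] at this
    nlinarith
  have hμt : t ≤ μ := by
    have h : (M:ℝ) ≤ q * m := by exact_mod_cast hm
    rw [ht, hμ] at h
    have h' : t * (q * R) ≤ μ * (q * R) := by linarith
    exact le_of_mul_le_mul_right h' (by positivity)
  have hkmr : k * μ + ω ≤ q := by
    have h : (k:ℝ) * m + o ≤ q * R := by exact_mod_cast hkm
    rw [hμ, hω] at h
    have h' : (k * μ + ω) * R ≤ q * R := by linarith
    exact le_of_mul_le_mul_right h' hRr
  have hI : t * q ≤ k * q + (q - k) := by
    have h : (M:ℝ) ≤ k * (q * R) + (q - k) * R := by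
      have := (Nat.cast_le (α := ℝ)).2 h1
      push_cast [Nat.cast_sub hkq] at this
      exact this
    rw [ht] at h
    have h' : (t * q) * R ≤ (k * q + (q - k)) * R := by linarith
    exact le_of_mul_le_mul_right h' hRr
  have hIIr : t * q ≤ k * q + (μ + ω) := by
    have h : (M:ℝ) ≤ k * (q * R) + (m + o) := by exact_mod_cast hII
    rw [ht, hμ, hω] at h
    have h' : (t * q) * R ≤ (k * q + (μ + ω)) * R := by linarith
    exact le_of_mul_le_mul_right h' hRr
  have hks : (k:ℝ) < s := by
    by_contra h
    push Not at h
    nlinarith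
  have hkt : t < k + 1 := by
    rcases Nat.eq_zero_or_pos k with h0 | h0
    · subst h0
      simp at hI
      nlinarith
    · have : (0:ℝ) < k := by exact_mod_cast h0
      by_contra h
      push Not at h
      nlinarith
  have hkpos : 1 ≤ k := by
    by_contra h
    have : k = 0 := by omega
    subst this
    simp at hkt; linarith
  have hk1 : (1:ℝ) ≤ k := by exact_mod_cast hkpos
  have hkm' : k * R < m := by
    have : (k:ℝ) * R < m := by rw [hμ]; exact mul_lt_mul_of_pos_right (by linarith) hRr
    exact_mod_cast this
  have hIVr : (k + 1) * (t * q) ≤ q * q + k * (μ + ω) := by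
    have h : ((k:ℝ) + 1) * M ≤ q * (q * R) + k * (m + o) := by exact_mod_cast hIV k hkm'
    rw [ht, hμ, hω] at h
    have h' : ((k + 1) * (t * q)) * R ≤ (q * q + k * (μ + ω)) * R := by linarith
    exact le_of_mul_le_mul_right h' hRr
  have hμω : μ + ω ≤ q - (k - 1) * t := by nlinarith
  -- consequences
  have hA : s * (q + (k - 1)) < (k + 1) * q := by
    have : t * (q + (k - 1)) ≤ (k + 1) * q := by nlinarith
    have : s * (q + (k - 1)) < t * (q + (k - 1)) := mul_lt_mul_of_pos_right hts (by linarith)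
    linarith
  have hB : s * ((k + 1) * q + k * (k - 1)) < q * (q + k) := by
    have h1 : t * ((k + 1) * q + k * (k - 1)) ≤ q * (q + k) := by nlinarith
    have : s * ((k + 1) * q + k * (k - 1)) < t * ((k + 1) * q + k * (k - 1)) :=
      mul_lt_mul_of_pos_right hts (by nlinarith)
    linarith
  have hA' : (s - 1) * (s - k) < 1 := by
    rw [← hss] at hA
    have : s * (s * s + (k - 1)) < s * ((k + 1) * s) := by linarith
    have := lt_of_mul_lt_mul_left this (by linarith)
    nlinarith
  have hB' : s * s * (k + 1 - s) < k * (s - k + 1) := by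
    rw [← hss] at hB
    have : s * ((k + 1) * (s * s) + k * (k - 1)) < s * (s * (s * s + k)) := by linarith
    have := lt_of_mul_lt_mul_left this (by linarith)
    nlinarith
  by_cases hk3 : 3 ≤ k
  · have hk3r : (3:ℝ) ≤ k := by exact_mod_cast hk3
    obtain ⟨x, hx⟩ : ∃ x, s = k + x := ⟨s - k, by ring⟩
    have hx0 : 0 < x := by linarith
    have hx1 : x < 1 := by linarith
    rw [hx] at hA' hB'
    have e1 : (k + x - 1) * x < 1 := by linarith
    have e2 : x < 1 / 2 := by
      nlinarith only [e1, mul_nonneg (sub_nonneg.2 hk3r) hx0.le, sq_nonneg x]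
    have e3 : (k:ℝ) * k * (1 - x) ≤ (k + x) * (k + x) * (1 - x) := by
      apply mul_le_mul_of_nonneg_right _ (by linarith)
      nlinarith only [mul_nonneg (sub_nonneg.2 hk3r) hx0.le, sq_nonneg x, hx0]
    have e4 : (k:ℝ) * (k * (1 - x)) < k * (x + 1) := by linarith
    have e5 := lt_of_mul_lt_mul_left e4 (by linarith)
    nlinarith only [e5, e2, mul_nonneg (sub_nonneg.2 hk3r) (sub_nonneg.2 hx1.le)]
  · have hkq2 : k * k < q := by
      have : (k:ℝ) * k < q := by rw [← hss]; nlinarith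
      exact_mod_cast this
    have hqk2 : q < (k + 1) * (k + 1) := by
      have : (q:ℝ) < (k + 1) * (k + 1) := by rw [← hss]; nlinarith
      exact_mod_cast this
    have hk12 : k = 1 ∨ k = 2 := by omega
    rcases hk12 with rfl | rfl
    · have : q = 2 ∨ q = 3 := by omega
      rcases this with h | h
      · have h3 := h2 h
        have h4 : (2:ℝ) * (q * R) ≤ M := by exact_mod_cast h3
        rw [ht] at h4
        have h5 : 2 ≤ t := le_of_mul_le_mul_right h4 (by positivity)
        have : (q:ℝ) = 2 := by exact_mod_cast h
        rw [this] at hI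
        norm_num at hI
        linarith
      · have : (q:ℝ) = 3 := by exact_mod_cast h
        rw [this] at hI hss
        norm_num at hI
        have : s < 5 / 3 := by linarith
        nlinarith only [this, hss, hs1]
    · have : q = 5 ∨ q = 6 ∨ q = 7 ∨ q = 8 := by omega
      norm_num at hA' hB'
      rw [hss] at hB'
      rcases this with h | h | h | h
      · have : (q:ℝ) = 5 := by exact_mod_cast h
        rw [this] at hB' hss
        have : 17 / 7 < s := by linarith
        nlinarith only [this, hss]
      · have : (q:ℝ) = 6 := by exact_mod_cast h
        rw [this] at hB' hss
        have : 5 / 2 < s := by linarith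
        nlinarith only [this, hss]
      · have : (q:ℝ) = 7 := by exact_mod_cast h
        rw [this] at hss
        have : 8 / 3 < s := by linarith
        nlinarith only [this, hss]
      · have : (q:ℝ) = 8 := by exact_mod_cast h
        rw [this] at hss
        have : 3 < s := by linarith
        nlinarith only [this, hss]

lemma antipode_not_mem (n : ℕ) (hn : 6 ≤ n) (heven : Even n) :
    (1 : ZMod n) ∉ nbhd n (n / 2 - 1) (1 + ((n / 2 : ℕ) : ZMod n)) := by
  intro h
  obtain ⟨d, hd, he⟩ := Finset.mem_image.1 h
  rw [Finset.mem_Icc] at hd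
  obtain ⟨k, hk⟩ := heven
  have h1 : ((n / 2 : ℕ) : ZMod n) + (d : ZMod n) = 0 := by
    have : (1 : ZMod n) + (((n / 2 : ℕ) : ZMod n) + (d : ZMod n)) = 1 + 0 := by
      rw [← add_assoc, he, add_zero]
    exact add_left_cancel this
  have h2 : (((((n / 2 : ℕ) : ℤ) + d : ℤ)) : ZMod n) = 0 := by
    rw [Int.cast_add, Int.cast_natCast]
    exact h1
  rw [ZMod.intCast_zmod_eq_zero_iff_dvd] at h2
  have h3 : 0 < ((n / 2 : ℕ) : ℤ) + d := by omega
  have h4 := Int.le_of_dvd h3 h2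
  omega

/-- Theorem 3, converse: for `n ≥ 6` even, `ν = 2`, `c_W = n-1`,
`h = n/2 - 1`, `c_R ≤ n-1` and `c := c_R - 1 ≥ 2`, every
`(n, n-1, c_R, 2, n/2-1, 2^K, q)` multi-version code with side information satisfies
`q^(2c-1) ≥ 2^(2K)`, i.e. its storage cost satisfies `log₂ q ≥ 2K/(2c-1)`. -/
theorem converse_cw_eq_n_sub_one (n cR c K q : ℕ) [NeZero n] (hn : 6 ≤ n)
    (heven : Even n) (hcRn : cR ≤ n - 1) (hc : c = cR - 1) (hc2 : 2 ≤ c)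
    (hK : 0 < K) (hq : 0 < q)
    (code : MVCode n (n - 1) cR 2 (n / 2 - 1) K q) :
    2 ^ (2 * K) ≤ q ^ (2 * c - 1) := by
  classical
  by_contra hcon
  push Not at hcon
  set p : ZMod n := 1 + ((n / 2 : ℕ) : ZMod n) with hp
  have hcast : ∀ x : ℕ, 0 < x → x < n → (x : ZMod n) ≠ 0 := by
    intro x h0 hx h
    rw [ZMod.natCast_eq_zero_iff] at h
    exact absurd (Nat.le_of_dvd h0 h) (by omega)
  have h10 : (1 : ZMod n) ≠ 0 := by simpa using hcast 1 (by omega) (by omega)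
  have hp0 : p ≠ 0 := by
    have := hcast (1 + n / 2) (by omega) (by omega)
    simpa [hp] using this
  have hp1 : p ≠ 1 := by
    have := hcast (n / 2) (by omega) (by omega)
    simpa [hp] using this
  have hcardn : Fintype.card (ZMod n) = n := ZMod.card n
  obtain ⟨T, hT3, hTc⟩ : ∃ T : Finset (ZMod n), ({0, 1, p} : Finset (ZMod n)) ⊆ T ∧ T.card = cR := by
    have h3 : ({0, 1, p} : Finset (ZMod n)).card = 3 :=
      Finset.card_eq_three.2 ⟨0, 1, p, h10.symm, hp0.symm, hp1.symm, rfl⟩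
    obtain ⟨T, h1, -, h2⟩ := Finset.exists_subsuperset_card_eq
      (Finset.subset_univ ({0, 1, p} : Finset (ZMod n))) (n := cR) (by omega)
      (by rw [Finset.card_univ, hcardn]; omega)
    exact ⟨T, h1, h2⟩
  have hT3c : (T \ {0, 1, p}).card = c - 2 := by
    have h3 : ({0, 1, p} : Finset (ZMod n)).card = 3 :=
      Finset.card_eq_three.2 ⟨0, 1, p, h10.symm, hp0.symm, hp1.symm, rfl⟩
    rw [Finset.card_sdiff_of_subset hT3, hTc, h3]
    omega
  let S : ZMod n → Finset (Fin 2) := fun j => if j = 0 then ∅ else univ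
  let S' : ZMod n → Finset (Fin 2) := fun j => if j = 0 then ∅ else if j = 1 then {0} else univ
  let V := Fin K → Bool
  let w : V → V → (Fin 2 → V) := fun w1 w2 => ![w1, w2]
  have hrS : ∀ u, (received n 2 S u).card = n - 1 := by
    intro u
    have : received n 2 S u = univ.erase 0 := by
      ext j
      by_cases hj : j = 0 <;> simp [received, S, hj]
    rw [this, Finset.card_erase_of_mem (mem_univ _), Finset.card_univ, hcardn]
  have hrS' : (received n 2 S' 0).card = n - 1 := by
    have : received n 2 S' 0 = univ.erase 0 := by
      ext j
      by_cases hj : j = 0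
      · simp [received, S', hj]
      · by_cases hj1 : j = 1 <;> simp [received, S', hj, hj1, h10]
    rw [this, Finset.card_erase_of_mem (mem_univ _), Finset.card_univ, hcardn]
  let w0 : V := fun _ => false
  let Z := {j // j ∈ T \ {0, 1, p}} → Fin q
  let X : Fin q → Fin q → Fin q → Z → (ZMod n → Fin q) := fun x0 x1 xp y j =>
    if j = 0 then x0 else if j = 1 then x1 else if j = p then xp else
      if h : j ∈ T \ {0, 1, p} then y ⟨j, h⟩ else x0
  have hX : ∀ (x : ZMod n → Fin q), ∀ j ∈ T,
      X (x 0) (x 1) (x p) (fun i => x i.1) j = x j := by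
    intro x j hj
    simp only [X]
    split_ifs with h1 h2 h3 h4
    · rw [h1]
    · rw [h2]
    · rw [h3]
    · rfl
    · exact absurd (by simp [hj, h1, h2, h3]) h4
  have hc0 : ∀ w1 w2, code.enc 0 S' (w w1 w2) = code.enc 0 S' (w w0 w0) := fun w1 w2 =>
    code.enc_local_word 0 S' _ _ (by simp [S'])
  have hc0S : ∀ w1 w2, code.enc 0 S (w w1 w2) = code.enc 0 S (w w0 w0) := fun w1 w2 =>
    code.enc_local_word 0 S _ _ (by simp [S])
  have hc1 : ∀ w1 w2, code.enc 1 S' (w w1 w2) = code.enc 1 S' (w w1 w0) := fun w1 w2 =>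
    code.enc_local_word 1 S' _ _ (by simp [S', h10, w])
  have hcp : ∀ w1 w2, code.enc p S (w w1 w2) = code.enc p S' (w w1 w2) := by
    intro w1 w2
    apply code.enc_local_state
    intro j hj
    have hj1 : j ≠ 1 := by
      rintro rfl
      exact antipode_not_mem n hn heven hj
    simp [S, S', hj1]
  let v : Fin q → Fin q → Z → V := fun φ b y =>
    (code.dec S' T (X (code.enc 0 S' (w w0 w0)) φ b y)).getD w0
  let D : Fin q → Finset V := fun b => (univ : Finset (Fin q × Z)).image
    (fun y => (code.dec S T (X (code.enc 0 S (w w0 w0)) y.1 b y.2)).getD w0)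
  have hZ : Fintype.card Z = q ^ (c - 2) := by
    simp only [Z, Fintype.card_fun, Fintype.card_fin, Fintype.card_coe, hT3c]
  have hV : Fintype.card V = 2 ^ K := by simp [V]
  obtain ⟨m, o, k, e1, e2, e3, e4, e5, e6⟩ := comb_core q (q ^ (c - 2)) (2 ^ K)
    (fun w1 : V => code.enc 1 S' (w w1 w0))
    (fun w1 w2 => code.enc p S' (w w1 w2))
    (fun w1 w2 => (fun i => code.enc i.1 S' (w w1 w2) : Z)) v D
    (by
      intro w1 w2
      obtain ⟨m, -, hm⟩ := code.dec_correct S' (w w1 w2) T hTc ⟨0, hrS'.ge⟩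
      have : v (code.enc 1 S' (w w1 w0)) (code.enc p S' (w w1 w2))
          (fun i => code.enc i.1 S' (w w1 w2)) = w w1 w2 m := by
        simp only [v]
        rw [← hc1 w1 w2, ← hc0 w1 w2,
          code.dec_local S' T _ (fun j => code.enc j S' (w w1 w2))
            (hX (fun j => code.enc j S' (w w1 w2))), hm]
        rfl
      rw [this]
      fin_cases m
      · left; rfl
      · right; rfl)
    (by
      intro w1 w2
      obtain ⟨m, hm1, hm⟩ := code.dec_correct S (w w1 w2) T hTc ⟨0, (hrS 0).ge⟩
      have hm' : m = 1 := by
        have := hm1 1 (hrS 1).ge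
        omega
      subst hm'
      refine mem_image.2 ⟨(code.enc 1 S (w w1 w2), fun i => code.enc i.1 S (w w1 w2)),
        mem_univ _, ?_⟩
      simp only []
      rw [← hcp w1 w2, ← hc0S w1 w2,
          code.dec_local S T _ (fun j => code.enc j S (w w1 w2))
            (hX (fun j => code.enc j S (w w1 w2))), hm]
      rfl)
    (by
      intro b
      refine card_image_le.trans ?_
      rw [Finset.card_univ, Fintype.card_prod, hZ, Fintype.card_fin])
    hZ hV (by positivity)
  have hQ : q * (q * q ^ (c - 2)) ^ 2 = q ^ (2 * c - 1) := by
    obtain ⟨d, rfl⟩ : ∃ d, c = d + 2 := ⟨c - 2, by omega⟩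
    have : 2 * (d + 2) - 1 = 2 * d + 3 := by omega
    rw [this]
    simp only [Nat.add_sub_cancel]
    ring
  refine arith_core q (q ^ (c - 2)) (2 ^ K) m o k (by positivity) ?_ ?_ e1 e2 e3 e4 e5 e6
  · rw [hQ, ← pow_mul, mul_comm K 2]
    exact hcon
  · rintro rfl
    have h1 : 2 * c - 1 < 2 * K := (Nat.pow_lt_pow_iff_right (by norm_num)).1 hcon
    have h2 : 2 * (2 * 2 ^ (c - 2)) = 2 ^ c := by
      obtain ⟨d, rfl⟩ : ∃ d, c = d + 2 := ⟨c - 2, by omega⟩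
      simp only [Nat.add_sub_cancel]
      ring
    rw [h2]
    exact Nat.pow_le_pow_right (by norm_num) (by omega)
end

section
/- Let ν = 2, c_R = c_W, and set c := 2c_W − n. Assume c ≥ 3, n ≥ ⌈7c/3⌉ + 4, that (n−c)/4 is an integer, and that h ≤ (n−c)/4. Then every (n, c_W, c_W, 2, h, 2^K, q) multi-version code with side information (for two independent K-bit versions) satisfies both q^{⌈2c/3⌉} ≥ 2^K and q^{2c−⌊2c/3⌋} ≥ 2^{2K}; equivalently, its storage cost satisfies log₂ q ≥ max{ K/⌈2c/3⌉ , 2K/(2c−⌊2c/3⌋) }. -/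
open Finset

lemma card_tri {α : Type*} [Fintype α] [DecidableEq α] (A B C : Finset (α × α))
    (T : Finset (α × α × α)) (r s : ℕ) (hA : A.card ≤ r) (hB : B.card ≤ r) (hC : C.card ≤ r)
    (hs : r ≤ s ^ 2)
    (hT : ∀ t ∈ T, (t.1, t.2.1) ∈ A ∧ (t.1, t.2.2) ∈ B ∧ (t.2.1, t.2.2) ∈ C) :
    T.card ≤ s * r := by
  have h1 : T.card = ∑ a : α, (T.filter (fun t => t.1 = a)).card :=
    Finset.card_eq_sum_card_fiberwise (f := fun t => t.1) (s := T) (t := univ) (by simp)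
  have hA1 : A.card = ∑ a : α, (A.filter (fun t => t.1 = a)).card :=
    Finset.card_eq_sum_card_fiberwise (f := fun t => t.1) (s := A) (t := univ) (by simp)
  have hB1 : B.card = ∑ a : α, (B.filter (fun t => t.1 = a)).card :=
    Finset.card_eq_sum_card_fiberwise (f := fun t => t.1) (s := B) (t := univ) (by simp)
  have key : ∀ a : α, 2 * (T.filter (fun t => t.1 = a)).card ≤
      s * ((A.filter (fun t => t.1 = a)).card + (B.filter (fun t => t.1 = a)).card) := by
    intro a
    have e1 : (T.filter (fun t => t.1 = a)).card ≤
        (A.filter (fun t => t.1 = a)).card * (B.filter (fun t => t.1 = a)).card := by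
      rw [← Finset.card_product]
      apply Finset.card_le_card_of_injOn (fun t => ((t.1, t.2.1), (t.1, t.2.2)))
      · intro t ht
        simp only [Finset.coe_filter, Set.mem_ofPred_eq] at ht
        simp only [Finset.coe_product, Set.mem_prod, Finset.coe_filter, Set.mem_ofPred_eq]
        exact ⟨⟨(hT t ht.1).1, ht.2⟩, ⟨(hT t ht.1).2.1, ht.2⟩⟩
      · rintro ⟨x, y, z⟩ _ ⟨x', y', z'⟩ _ h
        simp at h
        simp [h]
    have e2 : (T.filter (fun t => t.1 = a)).card ≤ C.card := by
      apply Finset.card_le_card_of_injOn (fun t => (t.2.1, t.2.2))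
      · intro t ht
        simp only [Finset.coe_filter, Set.mem_ofPred_eq] at ht
        exact (hT t ht.1).2.2
      · rintro ⟨x, y, z⟩ h1 ⟨x', y', z'⟩ h2 h
        simp at h h1 h2
        simp [h, h1.2, h2.2]
    generalize (T.filter (fun t => t.1 = a)).card = t at *
    generalize (A.filter (fun t => t.1 = a)).card = x at *
    generalize (B.filter (fun t => t.1 = a)).card = y at *
    rcases le_total (x + y) (2 * s) with h | h
    · have : 4 * (x * y) ≤ (x + y) ^ 2 := by
        zify; nlinarith [sq_nonneg ((x : ℤ) - y)]
      nlinarith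
    · nlinarith
  have : 2 * T.card ≤ s * (A.card + B.card) := by
    rw [h1, hA1, hB1, Finset.mul_sum, ← Finset.sum_add_distrib, Finset.mul_sum]
    exact Finset.sum_le_sum fun a _ => key a
  nlinarith

/-- The slab lemma. -/
lemma slab {V α : Type*} [Fintype V] [DecidableEq V] [Fintype α] [DecidableEq α]
    (q e : ℕ) (hα : Fintype.card α = q ^ 2) (hV : Fintype.card V = q ^ 2 + e) (he : 1 ≤ e)
    (x : V → V → α) (d : α → Option V) (R : Finset V) (hR : q + 1 ≤ R.card)
    (hd : ∀ w ∈ R, ∀ c, d (x w c) = some w ∨ d (x w c) = some c)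
    (hx : ∀ w ∈ R, ∀ a, (univ.filter (fun c => x w c = a)).card ≤ q)
    (u : V) (hu : u ∈ R) :
    (univ.filter (fun a => d a = some u)).card + e ≤ q := by
  have : Nonempty α := ⟨x u u⟩
  set ρ : V → ℕ := fun w => (univ.filter (fun a => d a = some w)).card with hρ
  set I : Finset V := univ.filter (fun v => ∃ a, d a = some v) with hI
  have row : ∀ w ∈ R, q ^ 2 + e ≤ q * ρ w + (I.erase w).card := by
    intro w hw
    have h1 : (univ : Finset V) ⊆ (univ.filter (fun c => d (x w c) = some w)) ∪ I.erase w := by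
      intro c _
      simp only [Finset.mem_union, Finset.mem_filter, Finset.mem_univ, true_and, Finset.mem_erase]
      by_cases h : d (x w c) = some w
      · exact Or.inl h
      · right
        have h2 := (hd w hw c).resolve_left h
        refine ⟨?_, ?_⟩
        · rintro rfl; exact h h2
        · simp only [hI, Finset.mem_filter, Finset.mem_univ, true_and]; exact ⟨_, h2⟩
    have h2 : (univ.filter (fun c => d (x w c) = some w)).card ≤ q * ρ w := by
      apply Finset.card_le_mul_card_image_of_maps_to (f := fun c => x w c)
      · intro c hc; simpa using hc
      · intro b hb
        refine le_trans (Finset.card_le_card ?_) (hx w hw b)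
        intro c hc; simp at hc ⊢; exact hc.2
    have h3 := Finset.card_le_card h1
    rw [Finset.card_univ, hV] at h3
    have := Finset.card_union_le (univ.filter (fun c => d (x w c) = some w)) (I.erase w)
    omega
  have hIle : I.card + ∑ w ∈ R, ρ w ≤ R.card + q ^ 2 := by
    have h1 : I.card ≤ R.card + (I \ R).card := by
      have := Finset.card_le_card (show I ⊆ R ∪ (I \ R) by intro z hz; simp; tauto)
      exact this.trans (Finset.card_union_le _ _)
    have h2 : (I \ R).card ≤ (univ.filter (fun a => ∀ w ∈ R, d a ≠ some w)).card := by
      choose! g hg using (show ∀ v ∈ I \ R, ∃ a, d a = some v by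
        intro v hv; simp [hI] at hv; exact hv.1)
      apply Finset.card_le_card_of_injOn g
      · intro v hv
        simp only [Finset.coe_filter, Finset.mem_univ, true_and, Set.mem_ofPred_eq]
        intro w hw h
        rw [hg v hv] at h
        simp at h hv
        subst h; exact hv.2 hw
      · intro v hv v' hv' h
        have := hg v hv
        rw [h, hg v' hv'] at this
        simpa using this.symm
    have h3 : ∑ w ∈ R, ρ w = (univ.filter (fun a => ∃ w ∈ R, d a = some w)).card := by
      rw [← Finset.card_biUnion]
      · congr 1; ext a; simp
      · intro w _ w' _ hww
        rw [Function.onFun, Finset.disjoint_left]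
        intro a ha ha'
        simp at ha ha'
        rw [ha] at ha'; simp at ha'; exact hww ha'
    have h4 := Finset.card_filter_add_card_filter_not (s := (univ : Finset α))
      (fun a => ∃ w ∈ R, d a = some w)
    rw [Finset.card_univ, hα] at h4
    have h5 : (univ.filter (fun a => ¬ ∃ w ∈ R, d a = some w)) =
      (univ.filter (fun a => ∀ w ∈ R, d a ≠ some w)) := by
      ext a; simp
    rw [h5] at h4
    omega
  have hIq : I.card ≤ q ^ 2 := by
    rw [← hα, ← Finset.card_univ]
    choose! g hg using (show ∀ v ∈ I, ∃ a, d a = some v by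
        intro v hv; simpa [hI] using hv)
    apply Finset.card_le_card_of_injOn g
    · intro v hv; simp
    · intro v hv v' hv' h
      have := hg v hv
      rw [h, hg v' hv'] at this
      simpa using this.symm
  have pos : ∀ w ∈ R, 1 ≤ ρ w := by
    intro w hw
    by_contra h
    have h0 : ρ w = 0 := by omega
    have := row w hw
    rw [h0] at this
    have := Finset.card_le_card (Finset.erase_subset w I)
    omega
  obtain ⟨w, hw, hmin⟩ := Finset.exists_min_image R ρ ⟨u, hu⟩
  have hwI : w ∈ I := by
    have := pos w hw
    obtain ⟨a, ha⟩ := Finset.card_pos.1 (show 0 < (univ.filter (fun a => d a = some w)).card from this)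
    simp at ha
    simp [hI]; exact ⟨a, ha⟩
  have hr := row w hw
  rw [Finset.card_erase_of_mem hwI] at hr
  have hIpos : 1 ≤ I.card := Finset.card_pos.2 ⟨w, hwI⟩
  have hsum : ρ u + (R.card - 1) * ρ w ≤ ∑ w ∈ R, ρ w := by
    rw [← Finset.add_sum_erase R ρ hu, ← Finset.card_erase_of_mem hu, ← smul_eq_mul]
    gcongr
    apply Finset.card_nsmul_le_sum
    intro z hz; exact hmin z (Finset.mem_of_mem_erase hz)
  have hpw := pos w hw
  change ρ u + e ≤ q
  obtain ⟨t, ht⟩ : ∃ t, R.card = q + 1 + t := ⟨R.card - (q+1), by omega⟩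
  obtain ⟨p, hp⟩ : ∃ p, ρ w = p + 1 := ⟨ρ w - 1, by omega⟩
  rw [ht] at hsum hIle
  rw [hp] at hsum hr
  have : q + 1 + t - 1 = q + t := by omega
  rw [this] at hsum
  have : q ^ 2 + e + 1 ≤ q * (p + 1) + I.card := by omega
  nlinarith [Nat.zero_le (t * p)]

/-- The row lemma. -/
lemma row_bound {V α : Type*} [Fintype V] [DecidableEq V] [Fintype α] [DecidableEq α]
    (u : V) (x1 x2 x3 : V → α)
    (hinj : ∀ c c', x1 c = x1 c' → x2 c = x2 c' → x3 c = x3 c' → c = c')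
    (d12 d13 d23 : α × α → Option V)
    (h12 : ∀ c, d12 (x1 c, x2 c) = some u ∨ d12 (x1 c, x2 c) = some c)
    (h13 : ∀ c, d13 (x1 c, x3 c) = some u ∨ d13 (x1 c, x3 c) = some c)
    (h23 : ∀ c, d23 (x2 c, x3 c) = some u ∨ d23 (x2 c, x3 c) = some c)
    (r s : ℕ) (hrs : r ≤ s ^ 2)
    (r12 : (univ.filter (fun a => d12 a = some u)).card ≤ r)
    (r13 : (univ.filter (fun a => d13 a = some u)).card ≤ r)
    (r23 : (univ.filter (fun a => d23 a = some u)).card ≤ r)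
    (O1 O2 O3 : Finset α) (U1 U2 U3 : ℕ)
    (hU1 : (univ.filter (fun c => x1 c ∉ O1)).card ≤ U1)
    (hU2 : (univ.filter (fun c => x2 c ∉ O2)).card ≤ U2)
    (hU3 : (univ.filter (fun c => x3 c ∉ O3)).card ≤ U3) :
    Fintype.card V ≤ U1 + U2 + U3 + (O1.card * O2.card + O1.card * O3.card + O2.card * O3.card)
      + s * r := by
  have aux : ∀ (d : α × α → Option V) (y z : V → α) (P Q : Finset α)
      (h : ∀ c, d (y c, z c) = some u ∨ d (y c, z c) = some c),
      (univ.filter (fun c => y c ∈ P ∧ z c ∈ Q ∧ d (y c, z c) ≠ some u)).card ≤ P.card * Q.card := by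
    intro d y z P Q h
    rw [← Finset.card_product]
    apply Finset.card_le_card_of_injOn (fun c => (y c, z c))
    · intro c hc
      simp at hc ⊢
      exact ⟨hc.1, hc.2.1⟩
    · intro c hc c' hc' hh
      simp only [Finset.coe_filter, Finset.mem_univ, true_and, Set.mem_ofPred_eq] at hc hc'
      have a1 := (h c).resolve_left hc.2.2
      have a2 := (h c').resolve_left hc'.2.2
      simp only at hh
      rw [hh, a2] at a1
      simpa using a1.symm
  have b12 := aux d12 x1 x2 O1 O2 h12
  have b13 := aux d13 x1 x3 O1 O3 h13
  have b23 := aux d23 x2 x3 O2 O3 h23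
  set C := univ.filter (fun c => d12 (x1 c, x2 c) = some u ∧ d13 (x1 c, x3 c) = some u ∧
    d23 (x2 c, x3 c) = some u) with hC
  have bC : C.card ≤ s * r := by
    have : (C.image (fun c => (x1 c, x2 c, x3 c))).card = C.card := by
      apply Finset.card_image_of_injective
      intro c c' h
      simp at h
      exact hinj c c' h.1 h.2.1 h.2.2
    rw [← this]
    apply card_tri _ _ _ _ r s r12 r13 r23 hrs
    intro t ht
    simp only [Finset.mem_image, hC, Finset.mem_filter, Finset.mem_univ, true_and] at ht
    obtain ⟨c, hc, rfl⟩ := ht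
    simpa using hc
  have cover : (univ : Finset V) ⊆
      (univ.filter (fun c => x1 c ∉ O1)) ∪ ((univ.filter (fun c => x2 c ∉ O2)) ∪
      ((univ.filter (fun c => x3 c ∉ O3)) ∪
      ((univ.filter (fun c => x1 c ∈ O1 ∧ x2 c ∈ O2 ∧ d12 (x1 c, x2 c) ≠ some u)) ∪
      ((univ.filter (fun c => x1 c ∈ O1 ∧ x3 c ∈ O3 ∧ d13 (x1 c, x3 c) ≠ some u)) ∪
      ((univ.filter (fun c => x2 c ∈ O2 ∧ x3 c ∈ O3 ∧ d23 (x2 c, x3 c) ≠ some u)) ∪ C))))) := by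
    intro c _
    simp only [Finset.mem_union, Finset.mem_filter, Finset.mem_univ, true_and, hC]
    tauto
  have := Finset.card_le_card cover
  rw [Finset.card_univ] at this
  have l1 := Finset.card_union_le (univ.filter (fun c => x1 c ∉ O1)) ((univ.filter (fun c => x2 c ∉ O2)) ∪
      ((univ.filter (fun c => x3 c ∉ O3)) ∪
      ((univ.filter (fun c => x1 c ∈ O1 ∧ x2 c ∈ O2 ∧ d12 (x1 c, x2 c) ≠ some u)) ∪
      ((univ.filter (fun c => x1 c ∈ O1 ∧ x3 c ∈ O3 ∧ d13 (x1 c, x3 c) ≠ some u)) ∪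
      ((univ.filter (fun c => x2 c ∈ O2 ∧ x3 c ∈ O3 ∧ d23 (x2 c, x3 c) ≠ some u)) ∪ C)))))
  have l2 := Finset.card_union_le (univ.filter (fun c => x2 c ∉ O2))
      ((univ.filter (fun c => x3 c ∉ O3)) ∪
      ((univ.filter (fun c => x1 c ∈ O1 ∧ x2 c ∈ O2 ∧ d12 (x1 c, x2 c) ≠ some u)) ∪
      ((univ.filter (fun c => x1 c ∈ O1 ∧ x3 c ∈ O3 ∧ d13 (x1 c, x3 c) ≠ some u)) ∪
      ((univ.filter (fun c => x2 c ∈ O2 ∧ x3 c ∈ O3 ∧ d23 (x2 c, x3 c) ≠ some u)) ∪ C))))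
  have l3 := Finset.card_union_le (univ.filter (fun c => x3 c ∉ O3))
      ((univ.filter (fun c => x1 c ∈ O1 ∧ x2 c ∈ O2 ∧ d12 (x1 c, x2 c) ≠ some u)) ∪
      ((univ.filter (fun c => x1 c ∈ O1 ∧ x3 c ∈ O3 ∧ d13 (x1 c, x3 c) ≠ some u)) ∪
      ((univ.filter (fun c => x2 c ∈ O2 ∧ x3 c ∈ O3 ∧ d23 (x2 c, x3 c) ≠ some u)) ∪ C)))
  have l4 := Finset.card_union_le
      (univ.filter (fun c => x1 c ∈ O1 ∧ x2 c ∈ O2 ∧ d12 (x1 c, x2 c) ≠ some u))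
      ((univ.filter (fun c => x1 c ∈ O1 ∧ x3 c ∈ O3 ∧ d13 (x1 c, x3 c) ≠ some u)) ∪
      ((univ.filter (fun c => x2 c ∈ O2 ∧ x3 c ∈ O3 ∧ d23 (x2 c, x3 c) ≠ some u)) ∪ C))
  have l5 := Finset.card_union_le
      (univ.filter (fun c => x1 c ∈ O1 ∧ x3 c ∈ O3 ∧ d13 (x1 c, x3 c) ≠ some u))
      ((univ.filter (fun c => x2 c ∈ O2 ∧ x3 c ∈ O3 ∧ d23 (x2 c, x3 c) ≠ some u)) ∪ C)
  have l6 := Finset.card_union_le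
      (univ.filter (fun c => x2 c ∈ O2 ∧ x3 c ∈ O3 ∧ d23 (x2 c, x3 c) ≠ some u)) C
  omega

/-- Rows u, v with the same two Y symbols: letters not owned by u are rare in row u. -/
lemma unowned {V α : Type*} [Fintype V] [DecidableEq V] [Fintype α] [DecidableEq α]
    (u v : V) (huv : u ≠ v) (x : V → α) (d : α → Option V)
    (h : ∀ c, d (x c) = some u ∨ d (x c) = some c) :
    (univ.filter (fun c => x c ∉ univ.filter (fun a => d a = some u))).card +
      (univ.filter (fun a => d a = some u)).card + (univ.filter (fun a => d a = some v)).card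
      ≤ Fintype.card α + 1 := by
  set N := univ.filter (fun a => d a ≠ some u ∧ d a ≠ some v) with hN
  have h1 : (univ.filter (fun c => x c ∉ univ.filter (fun a => d a = some u))).card ≤ N.card + 1 := by
    have : (univ.filter (fun c => x c ∉ univ.filter (fun a => d a = some u))) ⊆
      insert v ((univ.filter (fun c => x c ∈ N ∧ d (x c) = some c))) := by
      intro c hc
      simp at hc
      have := (h c).resolve_left hc
      simp [hN]
      by_cases hcv : c = v
      · exact Or.inl hcv
      · right; rw [this]; simp; refine ⟨?_, hcv⟩
        rintro rfl; exact hc this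
    refine (Finset.card_le_card this).trans ((Finset.card_insert_le _ _).trans ?_)
    gcongr
    apply Finset.card_le_card_of_injOn x
    · intro c hc; simp at hc ⊢; exact hc.1
    · intro c hc c' hc' hh
      simp only [Finset.coe_filter, Finset.mem_univ, true_and, Set.mem_ofPred_eq] at hc hc'
      have := hc.2
      rw [hh, hc'.2] at this
      simpa using this.symm
  have h2 : N.card + (univ.filter (fun a => d a = some u)).card +
      (univ.filter (fun a => d a = some v)).card = Fintype.card α := by
    rw [← Finset.card_univ, ← Finset.card_union_of_disjoint, ← Finset.card_union_of_disjoint]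
    · congr 1; ext a; simp [hN]; tauto
    · rw [Finset.disjoint_left]; intro a; simp [hN]
      rintro (h | h)
      · exact h.2
      · rw [h]; simpa using huv
    · rw [Finset.disjoint_left]; intro a; simp [hN]; tauto
  omega

lemma arith_p (q p1 p2 p3 r1 r2 r3 : ℕ) (hq : 4 ≤ q)
    (h : p1 + p2 + p3 ≤ r1 + r2 + r3) (h1 : p1 + r1 ≤ q) (h2 : p2 + r2 ≤ q) (h3 : p3 + r3 ≤ q) :
    4 * ((q + 1 - p1 - r1) + (q + 1 - p2 - r2) + (q + 1 - p3 - r3) + (p1 * p2 + p1 * p3 + p2 * p3))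
      ≤ 3 * q ^ 2 + 12 := by
  obtain ⟨g1, hg1⟩ : ∃ g, q = p1 + r1 + g := ⟨q - (p1 + r1), by omega⟩
  obtain ⟨g2, hg2⟩ : ∃ g, q = p2 + r2 + g := ⟨q - (p2 + r2), by omega⟩
  obtain ⟨g3, hg3⟩ : ∃ g, q = p3 + r3 + g := ⟨q - (p3 + r3), by omega⟩
  have e1 : q + 1 - p1 - r1 = g1 + 1 := by omega
  have e2 : q + 1 - p2 - r2 = g2 + 1 := by omega
  have e3 : q + 1 - p3 - r3 = g3 + 1 := by omega
  rw [e1, e2, e3]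
  have a1 : g1 + g2 + g3 + 2 * (p1 + p2 + p3) ≤ 3 * q := by omega
  have a2 : 3 * (p1 * p2 + p1 * p3 + p2 * p3) ≤ (p1 + p2 + p3) ^ 2 := by
    zify; nlinarith [sq_nonneg ((p1 : ℤ) - p2), sq_nonneg ((p1 : ℤ) - p3), sq_nonneg ((p2 : ℤ) - p3)]
  generalize p1 * p2 + p1 * p3 + p2 * p3 = t at *
  have a3 : 2 * (p1 + p2 + p3) ≤ 3 * q := by omega
  generalize p1 + p2 + p3 = P at *
  zify at *
  have : (0:ℤ) ≤ P := by positivity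
  nlinarith [mul_nonneg this (sub_nonneg.2 a3), mul_nonneg (sub_nonneg.2 hq) (sub_nonneg.2 a3)]

lemma game3_half {V : Type*} [Fintype V] [DecidableEq V] (q e s : ℕ) (hq : 4 ≤ q)
    (hV : Fintype.card V = q ^ 2 + e) (he : 1 ≤ e) (hs : q - e ≤ s ^ 2)
    (X1 X2 X3 : V → V → Fin q) (Y : V → Fin q) (y : Fin q)
    (hinj : ∀ w c c', X1 w c = X1 w c' → X2 w c = X2 w c' → X3 w c = X3 w c' → c = c')
    (D12 D13 D23 : Fin q × Fin q → Option V)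
    (h12 : ∀ w c, Y w = y → D12 (X1 w c, X2 w c) = some w ∨ D12 (X1 w c, X2 w c) = some c)
    (h13 : ∀ w c, Y w = y → D13 (X1 w c, X3 w c) = some w ∨ D13 (X1 w c, X3 w c) = some c)
    (h23 : ∀ w c, Y w = y → D23 (X2 w c, X3 w c) = some w ∨ D23 (X2 w c, X3 w c) = some c)
    (hR : q + 1 ≤ (univ.filter (fun w => Y w = y)).card)
    (u v : V) (huv : u ≠ v) (hu : Y u = y)
    (E1 E2 E3 : Fin q → Option V)
    (k1 : ∀ c, E1 (X1 u c) = some u ∨ E1 (X1 u c) = some c)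
    (k2 : ∀ c, E2 (X2 u c) = some u ∨ E2 (X2 u c) = some c)
    (k3 : ∀ c, E3 (X3 u c) = some u ∨ E3 (X3 u c) = some c)
    (hle : (univ.filter (fun a => E1 a = some u)).card + (univ.filter (fun a => E2 a = some u)).card
        + (univ.filter (fun a => E3 a = some u)).card ≤
      (univ.filter (fun a => E1 a = some v)).card + (univ.filter (fun a => E2 a = some v)).card
        + (univ.filter (fun a => E3 a = some v)).card) :
    e < q ∧ q ^ 2 + 4 * e ≤ 12 + 4 * (s * (q - e)) := by
  have hcard : Fintype.card (Fin q × Fin q) = q ^ 2 := by simp [sq]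
  have mult : ∀ (A B C : V → V → Fin q)
      (hABC : ∀ w c c', A w c = A w c' → B w c = B w c' → C w c = C w c' → c = c')
      (w : V) (a : Fin q × Fin q), (univ.filter (fun c => (A w c, B w c) = a)).card ≤ q := by
    intro A B C hABC w a
    conv_rhs => rw [← Fintype.card_fin q, ← Finset.card_univ]
    apply Finset.card_le_card_of_injOn (fun c => C w c)
    · intro c _; simp
    · intro c hc c' hc' hh
      simp only [Finset.coe_filter, Finset.mem_univ, true_and, Set.mem_ofPred_eq] at hc hc'
      rw [← hc'] at hc
      simp at hc
      exact hABC w c c' hc.1 hc.2 hh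
  have memR : ∀ w, w ∈ univ.filter (fun w => Y w = y) ↔ Y w = y := by simp
  have s12 := slab q e hcard hV he (fun w c => (X1 w c, X2 w c)) D12 _ hR
    (fun w hw c => h12 w c ((memR w).1 hw)) (fun w _ a => mult X1 X2 X3 hinj w a) u ((memR u).2 hu)
  have s13 := slab q e hcard hV he (fun w c => (X1 w c, X3 w c)) D13 _ hR
    (fun w hw c => h13 w c ((memR w).1 hw))
    (fun w _ a => mult X1 X3 X2 (fun w c c' a b d => hinj w c c' a d b) w a) u ((memR u).2 hu)
  have s23 := slab q e hcard hV he (fun w c => (X2 w c, X3 w c)) D23 _ hR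
    (fun w hw c => h23 w c ((memR w).1 hw))
    (fun w _ a => mult X2 X3 X1 (fun w c c' a b d => hinj w c c' d a b) w a) u ((memR u).2 hu)
  have o1 := unowned u v huv (X1 u) E1 k1
  have o2 := unowned u v huv (X2 u) E2 k2
  have o3 := unowned u v huv (X3 u) E3 k3
  have disj : ∀ E : Fin q → Option V, (univ.filter (fun a => E a = some u)).card +
      (univ.filter (fun a => E a = some v)).card ≤ q := by
    intro E
    rw [← Finset.card_union_of_disjoint]
    · exact (Finset.card_le_univ _).trans (by simp)
    · rw [Finset.disjoint_left]; intro a; simp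
      intro h; rw [h]; simpa using huv
  rw [Fintype.card_fin] at o1 o2 o3
  have rb := row_bound u (X1 u) (X2 u) (X3 u) (hinj u) D12 D13 D23
    (fun c => h12 u c hu) (fun c => h13 u c hu) (fun c => h23 u c hu) (q - e) s hs
    (by omega) (by omega) (by omega)
    (univ.filter (fun a => E1 a = some u)) (univ.filter (fun a => E2 a = some u))
    (univ.filter (fun a => E3 a = some u)) _ _ _ (Nat.le_sub_of_add_le (Nat.le_sub_of_add_le o1))
    (Nat.le_sub_of_add_le (Nat.le_sub_of_add_le o2))
    (Nat.le_sub_of_add_le (Nat.le_sub_of_add_le o3))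
  have ap := arith_p q _ _ _ _ _ _ hq hle (disj E1) (disj E2) (disj E3)
  rw [hV] at rb
  refine ⟨?_, ?_⟩
  · by_contra hcon
    have z : (univ.filter (fun a => D12 a = some u)).card = 0 := by omega
    have z13 : (univ.filter (fun a => D13 a = some u)).card = 0 := by omega
    -- then row u is injective into pairs
    have : Fintype.card V ≤ q ^ 2 := by
      rw [← hcard]
      apply Fintype.card_le_of_injective (fun c => (X1 u c, X2 u c))
      intro c c' hh
      rw [Finset.card_eq_zero, Finset.filter_eq_empty_iff] at z
      have a1 := (h12 u c hu).resolve_left (z (Finset.mem_univ _))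
      have a2 := (h12 u c' hu).resolve_left (z (Finset.mem_univ _))
      simp only at hh
      rw [hh, a2] at a1
      simpa using a1.symm
    omega
  · have hA1 : q + 1 - (univ.filter (fun a => E1 a = some u)).card - (univ.filter (fun a => E1 a = some v)).card
      = q + 1 - (univ.filter (fun a => E1 a = some v)).card - (univ.filter (fun a => E1 a = some u)).card := by omega
    have hA2 : q + 1 - (univ.filter (fun a => E2 a = some u)).card - (univ.filter (fun a => E2 a = some v)).card
      = q + 1 - (univ.filter (fun a => E2 a = some v)).card - (univ.filter (fun a => E2 a = some u)).card := by omega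
    have hA3 : q + 1 - (univ.filter (fun a => E3 a = some u)).card - (univ.filter (fun a => E3 a = some v)).card
      = q + 1 - (univ.filter (fun a => E3 a = some v)).card - (univ.filter (fun a => E3 a = some u)).card := by omega
    rw [hA1, hA2, hA3] at ap
    omega

lemma small_pow (q K : ℕ) (hq : q < 45) (h1 : q ^ 2 < 2 ^ K) (h2 : 2 ^ K < q ^ 2 + q) :
    q = 11 ∧ 2 ^ K = 128 := by
  have hK : K < 11 := by
    by_contra h
    have : 2 ^ 11 ≤ 2 ^ K := Nat.pow_le_pow_right (by norm_num) (by omega)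
    nlinarith
  interval_cases K <;> simp at h1 h2 ⊢ <;> interval_cases q <;> simp_all

/-- The three-server game. -/
lemma game3 {V : Type*} [Fintype V] [DecidableEq V] (q K : ℕ) (hq : 4 ≤ q)
    (hV : Fintype.card V = 2 ^ K) (hM : q ^ 2 < 2 ^ K)
    (X1 X2 X3 : V → V → Fin q) (Y Z : V → Fin q)
    (hinj : ∀ w c c', X1 w c = X1 w c' → X2 w c = X2 w c' → X3 w c = X3 w c' → c = c')
    (D12 D13 D23 : Fin q × Fin q × Fin q → Option V)
    (h12 : ∀ w c, D12 (X1 w c, X2 w c, Y w) = some w ∨ D12 (X1 w c, X2 w c, Y w) = some c)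
    (h13 : ∀ w c, D13 (X1 w c, X3 w c, Y w) = some w ∨ D13 (X1 w c, X3 w c, Y w) = some c)
    (h23 : ∀ w c, D23 (X2 w c, X3 w c, Y w) = some w ∨ D23 (X2 w c, X3 w c, Y w) = some c)
    (E1 E2 E3 : Fin q × Fin q × Fin q → Option V)
    (k1 : ∀ w c, E1 (X1 w c, Y w, Z w) = some w ∨ E1 (X1 w c, Y w, Z w) = some c)
    (k2 : ∀ w c, E2 (X2 w c, Y w, Z w) = some w ∨ E2 (X2 w c, Y w, Z w) = some c)
    (k3 : ∀ w c, E3 (X3 w c, Y w, Z w) = some w ∨ E3 (X3 w c, Y w, Z w) = some c) : False := by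
  obtain ⟨e, he⟩ : ∃ e, 2 ^ K = q ^ 2 + e := ⟨2 ^ K - q ^ 2, by omega⟩
  have he1 : 1 ≤ e := by omega
  obtain ⟨y, _, hy⟩ := Finset.exists_lt_card_fiber_of_mul_lt_card_of_maps_to
    (s := (univ : Finset V)) (t := (univ : Finset (Fin q))) (f := Y) (n := q) (by simp)
    (by simp [hV]; nlinarith)
  obtain ⟨u, hu, v, hv, huv, hZ⟩ := Finset.exists_ne_map_eq_of_card_lt_of_maps_to
    (s := univ.filter (fun w => Y w = y)) (t := (univ : Finset (Fin q))) (f := Z)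
    (by simpa using hy) (by simp)
  simp only [Finset.mem_filter, Finset.mem_univ, true_and] at hu hv
  have main : ∀ s, q - e ≤ s ^ 2 → e < q ∧ q ^ 2 + 4 * e ≤ 12 + 4 * (s * (q - e)) := by
    intro s hs
    rcases le_total ((univ.filter (fun a => E1 (a, y, Z u) = some u)).card +
        (univ.filter (fun a => E2 (a, y, Z u) = some u)).card
        + (univ.filter (fun a => E3 (a, y, Z u) = some u)).card)
      ((univ.filter (fun a => E1 (a, y, Z u) = some v)).card +
        (univ.filter (fun a => E2 (a, y, Z u) = some v)).card
        + (univ.filter (fun a => E3 (a, y, Z u) = some v)).card) with hle | hle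
    · exact game3_half q e s hq (by rw [hV, he]) he1 hs X1 X2 X3 Y y hinj
        (fun a => D12 (a.1, a.2, y)) (fun a => D13 (a.1, a.2, y)) (fun a => D23 (a.1, a.2, y))
        (by rintro w c rfl; exact h12 w c) (by rintro w c rfl; exact h13 w c)
        (by rintro w c rfl; exact h23 w c) hy u v huv hu
        (fun a => E1 (a, y, Z u)) (fun a => E2 (a, y, Z u)) (fun a => E3 (a, y, Z u))
        (by rw [← hu]; exact k1 u) (by rw [← hu]; exact k2 u) (by rw [← hu]; exact k3 u) hle
    · exact game3_half q e s hq (by rw [hV, he]) he1 hs X1 X2 X3 Y y hinj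
        (fun a => D12 (a.1, a.2, y)) (fun a => D13 (a.1, a.2, y)) (fun a => D23 (a.1, a.2, y))
        (by rintro w c rfl; exact h12 w c) (by rintro w c rfl; exact h13 w c)
        (by rintro w c rfl; exact h23 w c) hy v u huv.symm hv
        (fun a => E1 (a, y, Z u)) (fun a => E2 (a, y, Z u)) (fun a => E3 (a, y, Z u))
        (by rw [← hv, hZ]; exact k1 v) (by rw [← hv, hZ]; exact k2 v)
        (by rw [← hv, hZ]; exact k3 v) hle
  have heq : e < q := (main q (by nlinarith [Nat.sub_le q e])).1
  rcases lt_or_ge q 45 with h45 | h45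
  · obtain ⟨rfl, hk⟩ := small_pow q K h45 hM (by omega)
    have : e = 7 := by omega
    subst this
    have := (main 2 (by norm_num)).2
    norm_num at this
  · obtain ⟨s, hs1, hs2⟩ : ∃ s, q ≤ 6 * s ∧ 6 * s ≤ q + 5 := ⟨(q + 5) / 6, by omega, by omega⟩
    have h := (main s (by nlinarith [Nat.sub_le q e])).2
    have : s * (q - e) ≤ s * q := Nat.mul_le_mul_left _ (Nat.sub_le _ _)
    nlinarith

/-- Arithmetic for the chain bound. -/
lemma chain_arith (c q K : ℕ) (hc : 4 ≤ c) (hK : 0 < K) (hq : 0 < q)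
    (h : (2 ^ K) ^ 2 + (c - 1) * 2 ^ K ≤ 2 ^ K * q + (c - 1) * q ^ (c + 1))
    (h' : (2 ^ K) ^ 2 ≤ c * q ^ (c + 1)) :
    2 ^ (2 * K) ≤ q ^ (2 * c - (2 * c) / 3) := by
  obtain ⟨t, ht, ht1⟩ : ∃ t, 2 * c - 2 * c / 3 = c + 1 + t ∧ c ≤ 3 * t + 3 :=
    ⟨2 * c - 2 * c / 3 - (c + 1), by omega, by omega⟩
  have e2 : 2 ^ (2 * K) = (2 ^ K) ^ 2 := by rw [mul_comm, pow_mul]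
  by_cases hct : c ≤ q ^ t
  · rw [e2, ht, pow_add, mul_comm (q ^ (c + 1))]; exact h'.trans (Nat.mul_le_mul_right _ hct)
  have ht2 : 1 ≤ t := by omega
  rcases Nat.lt_or_ge q 2 with hq2 | hq2
  · have : q = 1 := by omega
    subst this
    exfalso
    have : 2 ≤ 2 ^ K := by
      calc 2 = 2 ^ 1 := rfl
        _ ≤ 2 ^ K := Nat.pow_le_pow_right (by norm_num) hK
    generalize 2 ^ K = M at *
    simp at h
    obtain ⟨d, rfl⟩ : ∃ d, c = d + 1 := ⟨c - 1, by omega⟩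
    simp at h
    nlinarith
  have hp : 2 ^ t ≤ q ^ t := Nat.pow_le_pow_left hq2 t
  have htt : t < 4 := by
    by_contra hcon
    have : ∀ t, 4 ≤ t → 3 * t + 3 ≤ 2 ^ t := by
      intro t ht
      induction t, ht using Nat.le_induction with
      | base => norm_num
      | succ n hn ih => rw [pow_succ]; omega
    have := this t (by omega)
    omega
  have hc12 : c ≤ 12 := by omega
  have hq6 : q < 6 := by
    by_contra hcon
    have h6 : 6 ^ t ≤ q ^ t := Nat.pow_le_pow_left (by omega) t
    interval_cases t <;> omega
  have hK' : K < 24 := by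
    by_contra hcon
    have a1 : q ^ (c + 1) ≤ 5 ^ 13 := 
      (Nat.pow_le_pow_left (by omega) _).trans (Nat.pow_le_pow_right (by norm_num) (by omega))
    have a2 : 2 ^ 24 ≤ 2 ^ K := Nat.pow_le_pow_right (by norm_num) (by omega)
    have a3 : c * q ^ (c + 1) ≤ 12 * 5 ^ 13 := Nat.mul_le_mul hc12 a1
    have : (2 ^ 24) ^ 2 ≤ (2 ^ K) ^ 2 := Nat.pow_le_pow_left a2 2
    norm_num at this a3
    omega
  clear hp h' e2 htt ht2
  interval_cases c <;> simp at ht <;> (try have ht' : t = 1 := by omega) <;>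
    (try have ht' : t = 2 := by omega) <;> (try have ht' : t = 3 := by omega) <;> subst ht' <;>
    clear ht ht1 <;>
    interval_cases q <;> simp at hct <;> interval_cases K <;> simp at h ⊢

/-! ### Ring geometry -/

lemma nbhd_val {n h : ℕ} [NeZero n] (hn : 2 * h + 1 ≤ n) {i j : ZMod n} (hj : j ∈ nbhd n h i) :
    ∃ d : ℤ, -(h : ℤ) ≤ d ∧ d ≤ h ∧ ((j.val : ℤ) = i.val + d ∨ (j.val : ℤ) = i.val + d + n ∨
      (j.val : ℤ) = i.val + d - n) := by
  simp only [nbhd, Finset.mem_image, Finset.mem_Icc] at hj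
  obtain ⟨d, ⟨h1, h2⟩, rfl⟩ := hj
  refine ⟨d, h1, h2, ?_⟩
  have hi := ZMod.val_lt i
  have hj := ZMod.val_lt (i + (d : ZMod n))
  have hdvd : (n : ℤ) ∣ ((i + (d : ZMod n)).val : ℤ) - (i.val + d) := by
    rw [← ZMod.intCast_zmod_eq_zero_iff_dvd]
    push_cast
    rw [ZMod.natCast_zmod_val, ZMod.natCast_zmod_val]
    ring
  obtain ⟨k, hk⟩ := hdvd
  generalize ((i + (d : ZMod n)).val) = jv at *
  have hn0 : (0 : ℤ) < n := by omega
  have k1 : k < 2 := by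
    by_contra hcon
    have : (n : ℤ) * 2 ≤ n * k := by apply mul_le_mul_of_nonneg_left <;> omega
    omega
  have k2 : -2 < k := by
    by_contra hcon
    have : (n : ℤ) * k ≤ n * (-2) := by apply mul_le_mul_of_nonneg_left <;> omega
    omega
  have : k = -1 ∨ k = 0 ∨ k = 1 := by omega
  rcases this with rfl | rfl | rfl <;> omega

lemma card_val (n a b : ℕ) [NeZero n] (hb : b ≤ n) :
    (univ.filter (fun z : ZMod n => a ≤ z.val ∧ z.val < b)).card = b - a := by
  rw [← Nat.card_Ico, ← Finset.card_image_of_injective _ (ZMod.val_injective n)]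
  congr 1
  ext t
  simp only [Finset.mem_image, Finset.mem_filter, Finset.mem_univ, true_and, Finset.mem_Ico]
  constructor
  · rintro ⟨z, hz, rfl⟩; exact hz
  · intro ht
    have : ((t : ZMod n)).val = t := ZMod.val_natCast_of_lt (by omega)
    exact ⟨t, by rw [this]; exact ht, this⟩

/-! ### The chain bound -/

/-- Abstract counting for the chain argument. -/
lemma chain_count {V : Type*} [Fintype V] [DecidableEq V] (c M Q Q1 : ℕ) (hc : 1 ≤ c)
    (hV : Fintype.card V = M) (D : ℕ → V → V → Option V)
    (h0 : ∀ a b, D 0 a b = some a) (hlast : ∀ a b, D c a b = some b)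
    (hD : ∀ t, t ≤ c → ∀ a b, D t a b = some a ∨ D t a b = some b)
    (h1 : (univ.filter (fun p : V × V => D 0 p.1 p.2 = some p.1 ∧ D 1 p.1 p.2 = some p.2)).card ≤ Q1)
    (hQ : ∀ t, t < c → (univ.filter (fun p : V × V => D t p.1 p.2 = some p.1 ∧
      D (t + 1) p.1 p.2 = some p.2)).card ≤ Q) :
    M ^ 2 + (c - 1) * M ≤ Q1 + (c - 1) * Q := by
  set P : ℕ → Finset (V × V) := fun t => univ.filter (fun p : V × V => D t p.1 p.2 = some p.1 ∧
      D (t + 1) p.1 p.2 = some p.2) with hP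
  have hsum : ∑ t ∈ range c, (P t).card ≤ Q1 + (c - 1) * Q := by
    obtain ⟨d, rfl⟩ : ∃ d, c = d + 1 := ⟨c - 1, by omega⟩
    rw [Finset.sum_range_succ']
    have : ∑ t ∈ range d, (P (t + 1)).card ≤ d * Q := by
      have := Finset.sum_le_card_nsmul (range d) (fun t => (P (t + 1)).card) Q
        (fun t ht => hQ (t + 1) (by simp at ht; omega))
      simpa using this
    have h1' : (P 0).card ≤ Q1 := h1
    simp only [Nat.add_sub_cancel]
    omega
  refine le_trans ?_ hsum
  have hdiag : ∀ t, t < c → (P t).card = M + ((P t).filter (fun p => p.1 ≠ p.2)).card := by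
    intro t ht
    rw [← Finset.card_filter_add_card_filter_not (s := P t) (fun p => p.1 = p.2)]
    congr 1
    rw [← hV, ← Finset.card_univ]
    symm
    apply Finset.card_bij (fun v _ => (v, v))
    · intro v _
      have a1 := hD t (by omega) v v
      have a2 := hD (t + 1) (by omega) v v
      simp only [or_self] at a1 a2
      simp [hP, a1, a2]
    · intro a _ b _ h; simpa using h
    · rintro ⟨a, b⟩ h; simp at h; exact ⟨a, by simp, by simp [h.2]⟩
  have hoff : M ^ 2 ≤ M + ∑ t ∈ range c, ((P t).filter (fun p => p.1 ≠ p.2)).card := by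
    have hM2 : (univ : Finset (V × V)).card = M ^ 2 := by simp [hV, sq]
    have hdg : ((univ : Finset V).image (fun v => (v, v))).card ≤ M := by
      rw [← hV, ← Finset.card_univ]; exact Finset.card_image_le
    rw [← hM2]
    have cov : (univ : Finset (V × V)) ⊆ ((univ : Finset V).image (fun v => (v, v))) ∪
        (range c).biUnion (fun t => (P t).filter (fun p => p.1 ≠ p.2)) := by
      rintro ⟨a, b⟩ _
      simp only [Finset.mem_union, Finset.mem_image, Finset.mem_univ, true_and, Finset.mem_biUnion,
        Finset.mem_filter, Finset.mem_range]
      by_cases hab : a = b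
      · left; exact ⟨a, by simp [hab]⟩
      right
      have hex : ∃ t, D t a b = some b := ⟨c, hlast a b⟩
      classical
      set t := Nat.find hex with htdef
      have ht : D t a b = some b := Nat.find_spec hex
      have htc : t ≤ c := Nat.find_min' hex (hlast a b)
      have ht0 : t ≠ 0 := by
        intro h; rw [h, h0] at ht; simp at ht; exact hab ht
      obtain ⟨s, hs⟩ : ∃ s, t = s + 1 := ⟨t - 1, by omega⟩
      have hs' : D s a b ≠ some b := Nat.find_min hex (by omega)
      refine ⟨s, by omega, ?_, hab⟩
      simp only [hP, Finset.mem_filter, Finset.mem_univ, true_and]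
      exact ⟨(hD s (by omega) a b).resolve_right hs', by rw [← hs]; exact ht⟩
    refine (Finset.card_le_card cov).trans ((Finset.card_union_le _ _).trans ?_)
    exact Nat.add_le_add hdg Finset.card_biUnion_le
  rw [Finset.sum_congr rfl (fun t ht => hdiag t (Finset.mem_range.1 ht)), Finset.sum_add_distrib]
  simp only [Finset.sum_const, Finset.card_range, smul_eq_mul]
  obtain ⟨d, rfl⟩ : ∃ d, c = d + 1 := ⟨c - 1, by omega⟩
  simp only [Nat.add_sub_cancel]
  nlinarith

/-- States of the chain. -/
def chainS (n m c b : ℕ) (z : ZMod n) : Finset (Fin 2) :=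
  if z.val < b + 2 * m then {0, 1} else if z.val < c + 2 * m then {0} else ∅

/-- Read sets of the chain. -/
def chainT (n m b : ℕ) [NeZero n] : Finset (ZMod n) :=
  univ.filter (fun z => (m ≤ z.val ∧ z.val < m + b) ∨ b + 2 * m ≤ z.val)

lemma mem_received {n ν : ℕ} [NeZero n] (S : ZMod n → Finset (Fin ν)) (u : Fin ν) (z : ZMod n) :
    z ∈ received n ν S u ↔ u ∈ S z := by simp [received]

lemma chain_main (n m h c K q : ℕ) [NeZero n] (hn : n = c + 4 * m) (hc : 1 ≤ c) (hh : h ≤ m)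
    (h2h : 2 * h + 1 ≤ n)
    (code : MVCode n (c + 2 * m) (c + 2 * m) 2 h K q) :
    (2 ^ K) ^ 2 + (c - 1) * 2 ^ K ≤ 2 ^ K * q + (c - 1) * q ^ (c + 1) ∧
    (2 ^ K) ^ 2 + (c - 1) * 2 ^ K ≤ q ^ (c + 1) + (c - 1) * q ^ (c + 1) := by
  set V := Fin K → Bool with hVdef
  have hV : Fintype.card V = 2 ^ K := by simp [hVdef]
  set E : ℕ → V → V → ZMod n → Fin q :=
    fun b a a' z => code.enc z (chainS n m c b) ![a, a'] with hE
  set D : ℕ → V → V → Option V :=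
    fun b a a' => code.dec (chainS n m c b) (chainT n m b) (E b a a') with hDdef
  have hTcard : ∀ b, b ≤ c → (chainT n m b).card = c + 2 * m := by
    intro b hb
    have e : chainT n m b = (univ.filter (fun z : ZMod n => m ≤ z.val ∧ z.val < m + b)) ∪
        (univ.filter (fun z : ZMod n => b + 2 * m ≤ z.val ∧ z.val < n)) := by
      ext z
      have := ZMod.val_lt z
      simp only [chainT, Finset.mem_union, Finset.mem_filter, Finset.mem_univ, true_and]
      omega
    rw [e, Finset.card_union_of_disjoint, card_val _ _ _ (by omega), card_val _ _ _ le_rfl]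
    · omega
    · rw [Finset.disjoint_left]; intro z; simp; omega
  have hrec0 : ∀ b, b ≤ c → (received n 2 (chainS n m c b) 0).card = c + 2 * m := by
    intro b hb
    have : received n 2 (chainS n m c b) 0 =
        univ.filter (fun z : ZMod n => 0 ≤ z.val ∧ z.val < c + 2 * m) := by
      ext z
      rw [mem_received]
      simp only [chainS, Finset.mem_filter, Finset.mem_univ, true_and]
      split_ifs <;> simp <;> omega
    rw [this, card_val _ _ _ (by omega)]; omega
  have hrec1 : (received n 2 (chainS n m c c) 1).card = c + 2 * m := by
    have : received n 2 (chainS n m c c) 1 =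
        univ.filter (fun z : ZMod n => 0 ≤ z.val ∧ z.val < c + 2 * m) := by
      ext z
      rw [mem_received]
      simp only [chainS, Finset.mem_filter, Finset.mem_univ, true_and]
      split_ifs <;> simp <;> omega
    rw [this, card_val _ _ _ (by omega)]; omega
  have hD : ∀ t, t ≤ c → ∀ a b, D t a b = some a ∨ D t a b = some b := by
    intro t ht a b
    obtain ⟨u, _, hu⟩ := code.dec_correct (chainS n m c t) ![a, b] (chainT n m t) (hTcard t ht)
      ⟨0, (hrec0 t ht).ge⟩
    fin_cases u
    · left; exact hu
    · right; exact hu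
  have hlast : ∀ a b, D c a b = some b := by
    intro a b
    obtain ⟨u, hu1, hu⟩ := code.dec_correct (chainS n m c c) ![a, b] (chainT n m c) (hTcard c le_rfl)
      ⟨0, (hrec0 c le_rfl).ge⟩
    have := hu1 1 hrec1.ge
    fin_cases u
    · simp at this
    · exact hu
  -- servers outside the block `[0, b+2m)` ignore the second version
  have hEy : ∀ b a e₁ e₂ z, b + 2 * m ≤ z.val → E b a e₁ z = E b a e₂ z := by
    intro b a e₁ e₂ z hz
    apply code.enc_local_word
    intro u hu
    simp only [chainS] at hu
    rw [if_neg (by omega)] at hu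
    split_ifs at hu
    · simp at hu; subst hu; rfl
    · simp at hu
  -- servers outside the block `[0, c+2m)` store constants
  have hEe : ∀ b a a' x x' z, b ≤ c → c + 2 * m ≤ z.val → E b a a' z = E b x x' z := by
    intro b a a' x x' z hb hz
    apply code.enc_local_word
    intro u hu
    simp only [chainS] at hu
    rw [if_neg (by omega), if_neg (by omega)] at hu
    simp at hu
  -- inner servers see only full states
  have hEx : ∀ b a a' z, b ≤ c → m ≤ z.val → z.val < m + b → E b a a' z = E c a a' z := by
    intro b a a' z hb h1 h2
    apply code.enc_local_state
    intro j hj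
    obtain ⟨d, d1, d2, hd⟩ := nbhd_val h2h hj
    have := ZMod.val_lt j
    have hj' : j.val < b + 2 * m := by omega
    simp only [chainS]
    rw [if_pos hj', if_pos (by omega)]
  have h0 : ∀ a b, D 0 a b = some a := by
    intro a b
    have : D 0 a b = D 0 a a := by
      apply code.dec_local
      intro j hj
      simp only [chainT, Finset.mem_filter, Finset.mem_univ, true_and] at hj
      exact hEy 0 a b a j (by omega)
    rw [this]
    simpa using hD 0 (by omega) a a
  have hpair : ∀ t, t < c → ∀ a b a' b' : V, D t a b = some a → D (t + 1) a b = some b →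
      D t a' b' = some a' → D (t + 1) a' b' = some b' →
      (∀ z : ZMod n, m ≤ z.val ∧ z.val < m + (t + 1) → E c a b z = E c a' b' z) →
      (a ≠ a' → ∀ z : ZMod n, t + 2 * m ≤ z.val ∧ z.val < c + 2 * m → E t a b z = E t a' b' z) →
      a = a' ∧ b = b' := by
    intro t ht a b a' b' e1 e2 e3 e4 hx hy
    have haa : a = a' := by
      by_contra hne
      have : D t a b = D t a' b' := by
        apply code.dec_local
        intro j hj
        simp only [chainT, Finset.mem_filter, Finset.mem_univ, true_and] at hj
        rcases hj with hj | hj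
        · rw [hEx t a b j (by omega) hj.1 hj.2, hEx t a' b' j (by omega) hj.1 hj.2]
          exact hx j (by omega)
        · rcases Nat.lt_or_ge j.val (c + 2 * m) with hj' | hj'
          · exact hy hne j ⟨hj, hj'⟩
          · exact hEe t _ _ _ _ j (by omega) hj'
      rw [e1, e3] at this
      exact hne (by simpa using this)
    refine ⟨haa, ?_⟩
    subst haa
    have : D (t + 1) a b = D (t + 1) a b' := by
      apply code.dec_local
      intro j hj
      simp only [chainT, Finset.mem_filter, Finset.mem_univ, true_and] at hj
      rcases hj with hj | hj
      · rw [hEx (t + 1) a b j (by omega) hj.1 hj.2, hEx (t + 1) a b' j (by omega) hj.1 hj.2]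
        exact hx j hj
      · exact hEy _ _ _ _ j hj
    rw [e2, e4] at this
    simpa using this
  have hQ : ∀ t, t < c → (univ.filter (fun p : V × V => D t p.1 p.2 = some p.1 ∧
      D (t + 1) p.1 p.2 = some p.2)).card ≤ q ^ (c + 1) := by
    intro t ht
    set B := univ.filter (fun z : ZMod n => m ≤ z.val ∧ z.val < m + (t + 1)) with hB
    set C := univ.filter (fun z : ZMod n => t + 2 * m ≤ z.val ∧ z.val < c + 2 * m) with hC
    have hcard : Fintype.card ((B → Fin q) × (C → Fin q)) = q ^ (c + 1) := by
      rw [Fintype.card_prod, Fintype.card_fun, Fintype.card_fun, Fintype.card_fin, Fintype.card_coe,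
        Fintype.card_coe, hB, hC, card_val _ _ _ (by omega), card_val _ _ _ (by omega), ← pow_add]
      congr 1; omega
    rw [← hcard, ← Finset.card_univ]
    apply Finset.card_le_card_of_injOn
      (fun p => (fun z : B => E c p.1 p.2 z, fun z : C => E t p.1 p.2 z))
    · intro p _; simp
    · rintro ⟨a, b⟩ hp ⟨a', b'⟩ hp' hh
      simp only [Finset.coe_filter, Finset.mem_univ, true_and, Set.mem_ofPred_eq] at hp hp'
      simp only [Prod.mk.injEq, funext_iff] at hh
      have := hpair t ht a b a' b' hp.1 hp.2 hp'.1 hp'.2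
        (fun z hz => hh.1 ⟨z, by simpa [hB] using hz⟩)
        (fun _ z hz => hh.2 ⟨z, by simpa [hC] using hz⟩)
      simp [this]
  have hQ1 : (univ.filter (fun p : V × V => D 0 p.1 p.2 = some p.1 ∧
      D 1 p.1 p.2 = some p.2)).card ≤ 2 ^ K * q := by
    have hcard : Fintype.card (V × Fin q) = 2 ^ K * q := by
      rw [Fintype.card_prod, hV, Fintype.card_fin]
    rw [← hcard, ← Finset.card_univ]
    apply Finset.card_le_card_of_injOn (fun p => (p.1, E c p.1 p.2 (m : ZMod n)))
    · intro p _; simp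
    · rintro ⟨a, b⟩ hp ⟨a', b'⟩ hp' hh
      simp only [Finset.coe_filter, Finset.mem_univ, true_and, Set.mem_ofPred_eq] at hp hp'
      simp only [Prod.mk.injEq] at hh
      have := hpair 0 (by omega) a b a' b' hp.1 hp.2 hp'.1 hp'.2
        (fun z hz => by
          have : z = (m : ZMod n) := by
            rw [← ZMod.natCast_zmod_val z]; congr 1; omega
          rw [this]; exact hh.2)
        (fun hne => absurd hh.1 hne)
      simp [this]
  exact ⟨chain_count c _ _ _ hc hV D h0 hlast hD hQ1 hQ,
    chain_count c _ _ _ hc hV D h0 hlast hD (hQ 0 (by omega)) hQ⟩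

/-! ### The case `c = 3` -/

lemma factor {α β γ : Type*} (f : α → β) (g : α → Option γ)
    (h : ∀ a a', f a = f a' → g a = g a') : ∃ D : β → Option γ, ∀ a, D (f a) = g a := by
  classical
  refine ⟨fun b => if hb : ∃ a, f a = b then g hb.choose else none, fun a => ?_⟩
  have hb : ∃ a', f a' = f a := ⟨a, rfl⟩
  simp only [hb, dif_pos]
  exact h _ _ hb.choose_spec

/-- States of the three-server game. -/
def gameS {n : ℕ} (A J : Finset (ZMod n)) (z : ZMod n) : Finset (Fin 2) :=
  if z ∈ A then (if z ∈ J then {0} else {0, 1}) else ∅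

lemma three_main (n m h K q : ℕ) [NeZero n] (hn : n = 3 + 4 * m) (hm : 2 ≤ m) (hh : h ≤ m)
    (h2h : 2 * h + 1 ≤ n) (hq : 4 ≤ q)
    (code : MVCode n (3 + 2 * m) (3 + 2 * m) 2 h K q) : 2 ^ K ≤ q ^ 2 := by
  by_contra hM
  push Not at hM
  set V := Fin K → Bool with hVdef
  have hV : Fintype.card V = 2 ^ K := by simp [hVdef]
  obtain ⟨y, hy⟩ : ∃ y : ZMod n, y.val = 0 := ⟨0, by simp⟩
  have ex : ∀ t, t < n → ∃ z : ZMod n, z.val = t := fun t ht => ⟨t, ZMod.val_natCast_of_lt ht⟩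
  obtain ⟨w, hw⟩ := ex (m + 1) (by omega)
  obtain ⟨s1, hs1⟩ := ex (2 * m + 2) (by omega)
  obtain ⟨s2, hs2⟩ := ex (2 * m + 3) (by omega)
  obtain ⟨s3, hs3⟩ := ex (2 * m + 4) (by omega)
  have hfive : ({y, w, s1, s2, s3} : Finset (ZMod n)).card ≤ 3 + 2 * m :=
    Finset.card_le_five.trans (by omega)
  obtain ⟨A, hA1, hA2⟩ := Finset.exists_superset_card_eq hfive (by rw [ZMod.card]; omega)
  have hyA : y ∈ A := hA1 (by simp)
  have hwA : w ∈ A := hA1 (by simp)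
  have h1A : s1 ∈ A := hA1 (by simp)
  have h2A : s2 ∈ A := hA1 (by simp)
  have h3A : s3 ∈ A := hA1 (by simp)
  have ne : ∀ {a b : ZMod n}, a.val ≠ b.val → a ≠ b := fun h h' => h (by rw [h'])
  have hAc : (Aᶜ).card = 2 * m := by
    rw [Finset.card_compl, ZMod.card, hA2]; omega
  have hT : ∀ a b c : ZMod n, a ∈ A → b ∈ A → c ∈ A → a.val ≠ b.val → a.val ≠ c.val →
      b.val ≠ c.val → (({a, b, c} : Finset (ZMod n)) ∪ Aᶜ).card = 3 + 2 * m := by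
    intro a b c ha hb hc hab hac hbc
    rw [Finset.card_union_of_disjoint, hAc, Finset.card_eq_three.2 ⟨a, b, c, ne hab, ne hac, ne hbc, rfl⟩]
    rw [Finset.disjoint_left]
    intro z hz
    simp at hz
    rcases hz with rfl | rfl | rfl <;> simpa
  have hrec0 : ∀ J, (received n 2 (gameS A J) 0).card = 3 + 2 * m := by
    intro J
    rw [← hA2]; congr 1; ext z
    rw [mem_received]
    simp only [gameS]
    split_ifs <;> simp [*]
  have hrec1 : (received n 2 (gameS A ∅) 1).card = 3 + 2 * m := by
    rw [← hA2]; congr 1; ext z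
    rw [mem_received]
    simp only [gameS]
    split_ifs <;> simp_all
  set E : Finset (ZMod n) → V × V → ZMod n → Fin q :=
    fun J p z => code.enc z (gameS A J) ![p.1, p.2] with hE
  -- decoding
  have hdec : ∀ (J : Finset (ZMod n)) (a b c : ZMod n), a ∈ A → b ∈ A → c ∈ A → a.val ≠ b.val →
      a.val ≠ c.val → b.val ≠ c.val → ∃ D : Fin q × Fin q × Fin q → Option V,
      (∀ p : V × V, D (E J p a, E J p b, E J p c) = some p.1 ∨
        D (E J p a, E J p b, E J p c) = some p.2) ∧
      (J = ∅ → ∀ p : V × V, D (E J p a, E J p b, E J p c) = some p.2) := by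
    intro J a b c ha hb hc hab hac hbc
    obtain ⟨D, hD⟩ := factor (fun p : V × V => (E J p a, E J p b, E J p c))
      (fun p => code.dec (gameS A J) ({a, b, c} ∪ Aᶜ) (E J p)) (by
        intro p p' hpp
        simp only [Prod.mk.injEq] at hpp
        apply code.dec_local
        intro j hj
        simp only [Finset.mem_union, Finset.mem_insert, Finset.mem_singleton, Finset.mem_compl] at hj
        rcases hj with (rfl | rfl | rfl) | hj
        · exact hpp.1
        · exact hpp.2.1
        · exact hpp.2.2
        · apply code.enc_local_word
          intro u hu
          simp [gameS, hj] at hu)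
    refine ⟨D, fun p => ?_, fun hJ p => ?_⟩
    · obtain ⟨u, _, hu⟩ := code.dec_correct (gameS A J) ![p.1, p.2] _ (hT a b c ha hb hc hab hac hbc)
        ⟨0, (hrec0 J).ge⟩
      have := hD p
      rw [this]
      fin_cases u
      · left; exact hu
      · right; exact hu
    · obtain ⟨u, hu1, hu⟩ := code.dec_correct (gameS A J) ![p.1, p.2] _ (hT a b c ha hb hc hab hac hbc)
        ⟨0, (hrec0 J).ge⟩
      have := hD p
      rw [this]
      have := hu1 1 (by rw [hJ]; exact hrec1.ge)
      fin_cases u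
      · simp at this
      · exact hu
  -- the inner servers do not see `y` and `w`
  have hfar : ∀ (J J' : Finset (ZMod n)) (z : ZMod n) (p : V × V),
      (∀ j ∈ nbhd n h z, (j ∈ J ↔ j ∈ J')) → E J p z = E J' p z := by
    intro J J' z p hJ
    apply code.enc_local_state
    intro j hj
    simp only [gameS, hJ j hj]
  have hX : ∀ (J : Finset (ZMod n)), J ⊆ {y, w} → ∀ z : ZMod n, 2 * m + 2 ≤ z.val →
      z.val ≤ 2 * m + 4 → ∀ p, E J p z = E ∅ p z := by
    intro J hJ z hz1 hz2 p
    apply hfar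
    intro j hj
    obtain ⟨d, d1, d2, hd⟩ := nbhd_val h2h hj
    simp only [Finset.notMem_empty, iff_false]
    intro hj'
    have := hJ hj'
    simp only [Finset.mem_insert, Finset.mem_singleton] at this
    rcases this with rfl | rfl <;> omega
  have hYw : ∀ p, E {y, w} p y = E {y} p y := by
    intro p
    apply hfar
    intro j hj
    obtain ⟨d, d1, d2, hd⟩ := nbhd_val h2h hj
    simp only [Finset.mem_insert, Finset.mem_singleton]
    constructor
    · rintro (rfl | rfl)
      · rfl
      · omega
    · exact Or.inl
  have hY1 : ∀ (J : Finset (ZMod n)) (z : ZMod n), z ∈ J → z ∈ A → ∀ a b b' : V,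
      E J (a, b) z = E J (a, b') z := by
    intro J z hz hzA a b b'
    apply code.enc_local_word
    intro u hu
    simp [gameS, hz, hzA] at hu
    subst hu; rfl
  obtain ⟨D0, _, hD0⟩ := hdec ∅ s1 s2 s3 h1A h2A h3A (by omega) (by omega) (by omega)
  obtain ⟨D12, hD12, _⟩ := hdec {y} s1 s2 y h1A h2A hyA (by omega) (by omega) (by omega)
  obtain ⟨D13, hD13, _⟩ := hdec {y} s1 s3 y h1A h3A hyA (by omega) (by omega) (by omega)
  obtain ⟨D23, hD23, _⟩ := hdec {y} s2 s3 y h2A h3A hyA (by omega) (by omega) (by omega)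
  obtain ⟨E1, hE1, _⟩ := hdec {y, w} s1 y w h1A hyA hwA (by omega) (by omega) (by omega)
  obtain ⟨E2, hE2, _⟩ := hdec {y, w} s2 y w h2A hyA hwA (by omega) (by omega) (by omega)
  obtain ⟨E3, hE3, _⟩ := hdec {y, w} s3 y w h3A hyA hwA (by omega) (by omega) (by omega)
  have sy : ({y} : Finset (ZMod n)) ⊆ {y, w} := by simp
  have c1 := fun J hJ => hX J hJ s1 (by omega) (by omega)
  have c2 := fun J hJ => hX J hJ s2 (by omega) (by omega)
  have c3 := fun J hJ => hX J hJ s3 (by omega) (by omega)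
  set v0 : V := fun _ => false
  have cy : ∀ a b, E {y} (a, b) y = E {y} (a, v0) y := fun a b => hY1 _ _ (by simp) hyA a b v0
  have cw : ∀ a b, E {y, w} (a, b) w = E {y, w} (a, v0) w :=
    fun a b => hY1 _ _ (by simp) hwA a b v0
  refine game3 (V := V) q K hq hV hM (fun a b => E ∅ (a, b) s1) (fun a b => E ∅ (a, b) s2)
    (fun a b => E ∅ (a, b) s3) (fun a => E {y} (a, v0) y) (fun a => E {y, w} (a, v0) w)
    ?_ D12 D13 D23 ?_ ?_ ?_ E1 E2 E3 ?_ ?_ ?_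
  · intro a b b' e1 e2 e3
    have i1 := hD0 rfl (a, b)
    have i2 := hD0 rfl (a, b')
    rw [e1, e2, e3, i2] at i1
    simpa using i1.symm
  · intro a b
    have := hD12 (a, b)
    rwa [c1 _ sy, c2 _ sy, cy] at this
  · intro a b
    have := hD13 (a, b)
    rwa [c1 _ sy, c3 _ sy, cy] at this
  · intro a b
    have := hD23 (a, b)
    rwa [c2 _ sy, c3 _ sy, cy] at this
  · intro a b
    have := hE1 (a, b)
    rwa [c1 _ subset_rfl, hYw, cy, cw] at this
  · intro a b
    have := hE2 (a, b)
    rwa [c2 _ subset_rfl, hYw, cy, cw] at this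
  · intro a b
    have := hE3 (a, b)
    rwa [c3 _ subset_rfl, hYw, cy, cw] at this

/-- Theorem 4, converse: for `ν = 2`, `c_R = c_W`, `c := 2c_W - n ≥ 3`,
`n ≥ ⌈7c/3⌉ + 4`, `(n-c)/4` an integer and `h ≤ (n-c)/4`, every
`(n, c_W, c_W, 2, h, 2^K, q)` multi-version code with side information satisfies both
`q^⌈2c/3⌉ ≥ 2^K` and `q^(2c - ⌊2c/3⌋) ≥ 2^(2K)`, i.e. its storage cost satisfies
`log₂ q ≥ max{K/⌈2c/3⌉, 2K/(2c - ⌊2c/3⌋)}`. -/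
theorem converse_impossibility (n cW h c K q : ℕ) [NeZero n]
    (hcWn : cW ≤ n) (hc : c + n = 2 * cW) (hc3 : 3 ≤ c)
    (hn : (7 * c + 2) / 3 + 4 ≤ n) (hdiv : 4 ∣ (n - c))
    (hh0 : 0 < h) (hh : h ≤ (n - c) / 4) (h2h : 2 * h + 1 ≤ n)
    (hK : 0 < K) (hq : 0 < q)
    (code : MVCode n cW cW 2 h K q) :
    2 ^ K ≤ q ^ ((2 * c + 2) / 3) ∧ 2 ^ (2 * K) ≤ q ^ (2 * c - (2 * c) / 3) := by
  obtain ⟨m, hm⟩ := hdiv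
  have hcn : c ≤ n := by omega
  have hn' : n = c + 4 * m := by omega
  have hcW : cW = c + 2 * m := by omega
  subst hcW
  have hhm : h ≤ m := by omega
  have hchain := chain_main n m h c K q hn' (by omega) hhm h2h code
  have key : 2 ^ (2 * K) ≤ q ^ (2 * c - (2 * c) / 3) := by
    rcases Nat.lt_or_ge c 4 with hc4 | hc4
    · have : c = 3 := by omega
      subst this
      have hm2 : 2 ≤ m := by omega
      have goal : 2 ^ K ≤ q ^ 2 := by
        rcases Nat.lt_or_ge q 4 with hq4 | hq4
        · by_contra hcon
          push Not at hcon
          have h1 := hchain.1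
          have h16 : K < 5 := by
            by_contra hK5
            have : 2 ^ 5 ≤ 2 ^ K := Nat.pow_le_pow_right (by norm_num) (by omega)
            generalize 2 ^ K = M at *
            interval_cases q <;> simp at h1 <;> nlinarith
          clear hchain code
          interval_cases q <;> interval_cases K <;> simp at h1 hcon
        · exact three_main n m h K q hn' hm2 hhm h2h hq4 code
      have e1 : 2 ^ (2 * K) = (2 ^ K) ^ 2 := by rw [mul_comm, pow_mul]
      have e2 : q ^ (2 * 3 - (2 * 3) / 3) = (q ^ 2) ^ 2 := by rw [← pow_mul]
      rw [e1, e2]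
      exact Nat.pow_le_pow_left goal 2
    · refine chain_arith c q K hc4 hK hq hchain.1 ?_
      have h2 := hchain.2
      obtain ⟨d, rfl⟩ : ∃ d, c = d + 1 := ⟨c - 1, by omega⟩
      simp only [Nat.add_sub_cancel] at h2
      nlinarith [Nat.zero_le (d * 2 ^ K)]
  refine ⟨?_, key⟩
  have e1 : 2 ^ (2 * K) = (2 ^ K) ^ 2 := by rw [mul_comm, pow_mul]
  have h3 : (2 ^ K) ^ 2 ≤ (q ^ ((2 * c + 2) / 3)) ^ 2 := by
    rw [← e1, ← pow_mul]
    exact key.trans (Nat.pow_le_pow_right hq (by omega))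
  exact (Nat.pow_le_pow_iff_left (by norm_num)).1 h3
end

section
/- Let n ≥ 11 with n ≡ 3 (mod 4), let ν = 2, c_W = c_R = (n+3)/2 (so that c := c_W + c_R − n = 3), and let h ≤ (n−3)/4. Then every (n, (n+3)/2, (n+3)/2, 2, h, 2^K, q) multi-version code with side information (for two independent K-bit versions) satisfies q² ≥ 2^K, i.e., its storage cost satisfies log₂ q ≥ K/2. -/
open Finset

lemma arith_one (q p p' β γ ef eg S : ℕ) (h1 : β + ef + p' ≤ q) (h2 : γ + eg + p' ≤ q)
    (hb : p ≤ β) (hg : p ≤ γ)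
    (hS : S ≤ p + (β - p) + (γ - p) + (β - p) * (γ - p))
    (hS0 : p = 0 → S ≤ β * γ) :
    S + β * eg + ef * γ ≤ p + ((q + 1) + (2 * p - (q + 1))) * (q - p' - p) := by
  obtain ⟨s, rfl⟩ := Nat.exists_eq_add_of_le hb
  obtain ⟨t, rfl⟩ := Nat.exists_eq_add_of_le hg
  obtain ⟨d, hd⟩ : ∃ d, q = p' + p + d := ⟨q - p' - p, by omega⟩
  have e1 : q - p' - p = d := by omega
  rw [e1]
  have hs : s + ef ≤ d := by omega
  have ht : t + eg ≤ d := by omega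
  simp only [Nat.add_sub_cancel_left] at hS
  obtain ⟨μ, hμ⟩ : ∃ μ, μ = (q + 1) + (2 * p - (q + 1)) := ⟨_, rfl⟩
  rw [← hμ]
  have hμ1 : q + 1 ≤ μ := by omega
  have hμ2 : 2 * p ≤ μ := by omega
  have hdq : d + p ≤ q := by omega
  clear hμ hd e1 h1 h2 hb hg
  have a1 : (p + s) * eg ≤ (p + s) * (d - t) := Nat.mul_le_mul_left _ (by omega)
  have a2 : ef * (p + t) ≤ (d - s) * (p + t) := Nat.mul_le_mul_right _ (by omega)
  obtain ⟨s', hs'⟩ : ∃ s', d = s + s' := ⟨d - s, by omega⟩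
  obtain ⟨t', ht'⟩ : ∃ t', d = t + t' := ⟨d - t, by omega⟩
  rw [show d - t = t' by omega] at a1
  rw [show d - s = s' by omega] at a2
  have a3 : (q + 1) * d ≤ μ * d := Nat.mul_le_mul_right _ hμ1
  have a4 : 2 * p * d ≤ μ * d := Nat.mul_le_mul_right _ hμ2
  have a5 : (d + p) * d ≤ q * d := Nat.mul_le_mul_right _ hdq
  rcases Nat.eq_zero_or_pos p with hp | hp
  · have := hS0 hp
    subst hp
    zify at *
    have : (0 : ℤ) ≤ s' * t' := by positivity
    nlinarith
  · rcases le_total (s + t) d with hst | hst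
    · -- linear in s + t
      obtain ⟨k, hk⟩ := Nat.exists_eq_add_of_le hst
      have key : d * (p + s + p + t) + (s + t) ≤ μ * d + p * (s + t) + s * t := by
        have b1 : (d + p + 1) * (s + t) ≤ μ * (s + t) := Nat.mul_le_mul_right _ (by omega)
        have b2 : (2 * p) * k ≤ μ * k := Nat.mul_le_mul_right _ hμ2
        have : μ * d = μ * (s + t) + μ * k := by rw [hk]; ring
        have e2 : p * d = p * (s + t) + p * k := by rw [hk]; ring
        nlinarith
      zify at *
      have h1 : (s' : ℤ) = d - s := by linarith
      have h2 : (t' : ℤ) = d - t := by linarith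
      rw [h2] at a1
      rw [h1] at a2
      nlinarith
    · obtain ⟨k, hk⟩ := Nat.exists_eq_add_of_le hst
      zify at *
      have h1 : (s' : ℤ) = d - s := by linarith
      have h2 : (t' : ℤ) = d - t := by linarith
      have : (0 : ℤ) ≤ s' * t' := by positivity
      have hk' : (k : ℤ) * 1 ≤ k * p := by
        apply mul_le_mul_of_nonneg_left _ (by positivity)
        exact_mod_cast hp
      have hk2 : (k : ℤ) = s + t - d := by linarith
      rw [h2] at a1
      rw [h1] at a2
      rw [h1, h2] at this
      rw [hk2] at hk'
      nlinarith

lemma arith_two (q : ℕ) (p d : Fin q → ℕ) (hsum : ∑ a, p a = q + 1)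
    (hd : ∀ a, p a + d a ≤ q)
    (hp : q + 1 ≤ 11 ∨ ∀ a, 2 * p a ≤ q + 1 + 2) :
    ∑ a, (2 * p a - (q + 1)) * d a < q + 1 := by
  by_cases hall : ∀ a, 2 * p a ≤ q + 1
  · rw [Finset.sum_eq_zero]
    · omega
    · intro a _
      have := hall a
      rw [Nat.sub_eq_zero_of_le this, zero_mul]
  · push Not at hall
    obtain ⟨a0, ha0⟩ := hall
    rw [Finset.sum_eq_single a0]
    · obtain ⟨k, hk⟩ := Nat.exists_eq_add_of_lt ha0
      have hda := hd a0
      have e : 2 * p a0 - (q + 1) = k + 1 := by omega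
      rw [e]
      rcases hp with hp | hp
      · have : p a0 ≤ 11 := by omega
        have : d a0 ≤ 11 := by omega
        have hk2 : k + 1 + 2 * d a0 + 1 ≤ q := by omega
        have hk3 : k ≤ 10 := by omega
        generalize d a0 = D at *
        clear hk e hda ha0 hsum hd
        interval_cases k <;> omega
      · have := hp a0
        have hk3 : k ≤ 1 := by omega
        interval_cases k <;> omega
    · intro b _ hb
      have : p b + p a0 ≤ q + 1 := by
        rw [← hsum, ← Finset.sum_pair hb]
        exact Finset.sum_le_sum_of_subset (Finset.subset_univ _)
      rw [Nat.sub_eq_zero_of_le (by omega), zero_mul]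
    · simp

lemma core {V : Type*} [Fintype V] [DecidableEq V] (q : ℕ) (C : Finset V)
    (hC : C.card = q + 1) (hM : q ^ 2 < Fintype.card V)
    (y1 y2 y3 : V → V → Fin q) (f g : Fin q → Fin q → V)
    (hf : ∀ w ∈ C, ∀ v, f (y1 w v) (y2 w v) = w ∨ f (y1 w v) (y2 w v) = v)
    (hg : ∀ w ∈ C, ∀ v, g (y1 w v) (y3 w v) = w ∨ g (y1 w v) (y3 w v) = v)
    (hinj : ∀ w ∈ C, ∀ v v', y1 w v = y1 w v' → y2 w v = y2 w v' → y3 w v = y3 w v' → v = v')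
    (hp : q + 1 ≤ 11 ∨ ∀ a, 2 * (C.filter (fun w => y1 w w = a)).card ≤ q + 1 + 2) :
    False := by
  classical
  set I : Fin q → Finset V := fun a =>
    (Finset.univ.image (f a) ∩ Finset.univ.image (g a)) \ C with hI
  set F : Finset V := Finset.univ.biUnion I with hF
  set E : Finset V := (Finset.univ \ C) \ F with hE
  set X : Fin q → Finset V → Finset (Fin q) := fun a U => Finset.univ.filter (fun b => f a b ∈ U) with hX
  set Z : Fin q → Finset V → Finset (Fin q) := fun a U => Finset.univ.filter (fun b => g a b ∈ U) with hZ
  set P : Fin q → Finset V := fun a => C.filter (fun w => y1 w w = a) with hP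
  have hEC : ∀ e ∈ E, e ∉ C := by
    intro e he; simp [hE] at he; exact he.1
  have hEI : ∀ e ∈ E, ∀ a, e ∉ I a := by
    intro e he a; simp only [hE, hF, Finset.mem_sdiff, Finset.mem_biUnion, not_exists] at he
    intro h; exact he.2 a ⟨Finset.mem_univ _, h⟩
  have hsumP : ∑ a, (P a).card = q + 1 := by
    rw [← hC]
    exact (Finset.card_eq_sum_card_fiberwise (f := fun w => y1 w w) (t := Finset.univ)
      (fun _ _ => by simp)).symm
  -- lower bound on E
  have hEcard : Fintype.card V ≤ E.card + (q + 1) + ∑ a, (I a).card := by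
    have h1 : (Finset.univ : Finset V) ⊆ E ∪ C ∪ F := by
      intro v _
      simp only [hE, Finset.mem_union, Finset.mem_sdiff, Finset.mem_univ, true_and]
      tauto
    have h2 := Finset.card_le_card h1
    have h3 := Finset.card_union_le (E ∪ C) F
    have h4 := Finset.card_union_le E C
    have h5 : F.card ≤ ∑ a, (I a).card := Finset.card_biUnion_le
    rw [Finset.card_univ] at h2
    omega
  -- rows
  have hrow : ∀ w ∈ C, E.card + 1 ≤ ∑ a, ((X a {w}).card * (Z a {w}).card
      + (X a {w}).card * (Z a E).card + (X a E).card * (Z a {w}).card) := by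
    intro w hw
    have hwE : w ∉ E := fun h => hEC w h hw
    rw [← Finset.card_insert_of_notMem hwE]
    let R : Fin q → Finset (Fin q × Fin q) := fun a =>
      (X a {w} ×ˢ Z a {w}) ∪ (X a {w} ×ˢ Z a E) ∪ (X a E ×ˢ Z a {w})
    calc (insert w E).card ≤ ((Finset.univ : Finset (Fin q)).sigma R).card := by
          apply Finset.card_le_card_of_injOn (fun v => ⟨y1 w v, (y2 w v, y3 w v)⟩)
          · intro v hv
            have h1 := hf w hw v
            have h2 := hg w hw v
            simp only [Finset.coe_insert, Set.mem_insert_iff, Finset.mem_coe] at hv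
            simp only [Finset.coe_sigma, Set.mem_sigma_iff, Finset.mem_coe, Finset.mem_univ,
              true_and, R, X, Z, Finset.mem_union, Finset.mem_product, Finset.mem_filter,
              Finset.mem_singleton]
            rcases hv with rfl | hv
            · left; left; constructor
              · tauto
              · tauto
            · rcases h1 with h1 | h1 <;> rcases h2 with h2 | h2
              · left; left; exact ⟨h1, h2⟩
              · left; right; exact ⟨h1, by rw [h2]; exact hv⟩
              · right; exact ⟨by rw [h1]; exact hv, h2⟩
              · exfalso
                apply hEI v hv (y1 w v)
                simp only [hI, Finset.mem_sdiff, Finset.mem_inter, Finset.mem_image]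
                exact ⟨⟨⟨_, Finset.mem_univ _, h1⟩, ⟨_, Finset.mem_univ _, h2⟩⟩, hEC v hv⟩
          · intro v _ v' _ h
            simp only [Sigma.mk.injEq, heq_eq_eq, Prod.mk.injEq] at h
            exact hinj w hw v v' h.1 h.2.1 h.2.2
      _ = ∑ a, (R a).card := Finset.card_sigma _ _
      _ ≤ _ := by
          apply Finset.sum_le_sum
          intro a _
          refine (Finset.card_union_le _ _).trans ?_
          refine (Nat.add_le_add_right (Finset.card_union_le _ _) _).trans ?_
          simp only [Finset.card_product]; exact le_rfl
  have hXC : ∀ a, ∑ w ∈ C, (X a {w}).card = (X a C).card := by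
    intro a
    rw [Finset.card_eq_sum_card_fiberwise (f := f a) (t := C) (s := X a C)]
    · apply Finset.sum_congr rfl
      intro w hw
      congr 1
      ext b; simp [hX]; intro h; rw [h]; exact hw
    · intro b hb; simpa [hX] using hb
  have hZC : ∀ a, ∑ w ∈ C, (Z a {w}).card = (Z a C).card := by
    intro a
    rw [Finset.card_eq_sum_card_fiberwise (f := g a) (t := C) (s := Z a C)]
    · apply Finset.sum_congr rfl
      intro w hw
      congr 1
      ext b; simp [hZ]; intro h; rw [h]; exact hw
    · intro b hb; simpa [hZ] using hb
  have htot : (q + 1) * (E.card + 1) ≤ ∑ a, (∑ w ∈ C, (X a {w}).card * (Z a {w}).card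
      + (X a C).card * (Z a E).card + (X a E).card * (Z a C).card) := by
    have := Finset.sum_le_sum hrow
    rw [Finset.sum_const, hC, smul_eq_mul, Finset.sum_comm] at this
    refine this.trans (le_of_eq ?_)
    apply Finset.sum_congr rfl
    intro a _
    rw [Finset.sum_add_distrib, Finset.sum_add_distrib, ← Finset.sum_mul, ← Finset.mul_sum,
      hXC, hZC]
  -- indicator of P a
  have hPx : ∀ a, ∀ w ∈ C, (if w ∈ P a then 1 else 0) ≤ (X a {w}).card := by
    intro a w hw
    split_ifs with h
    · rw [Nat.one_le_iff_ne_zero, Finset.card_ne_zero]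
      simp only [hP, Finset.mem_filter] at h
      refine ⟨y2 w w, ?_⟩
      have := hf w hw w
      simp only [hX, Finset.mem_filter, Finset.mem_univ, true_and, Finset.mem_singleton]
      rw [← h.2]; tauto
    · exact Nat.zero_le _
  have hPz : ∀ a, ∀ w ∈ C, (if w ∈ P a then 1 else 0) ≤ (Z a {w}).card := by
    intro a w hw
    split_ifs with h
    · rw [Nat.one_le_iff_ne_zero, Finset.card_ne_zero]
      simp only [hP, Finset.mem_filter] at h
      refine ⟨y3 w w, ?_⟩
      have := hg w hw w
      simp only [hZ, Finset.mem_filter, Finset.mem_univ, true_and, Finset.mem_singleton]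
      rw [← h.2]; tauto
    · exact Nat.zero_le _
  have hPs : ∀ a, ∑ w ∈ C, (if w ∈ P a then 1 else 0) = (P a).card := by
    intro a
    rw [← Finset.card_filter]
    congr 1
    ext w; simp [hP]
  have hside : ∀ (φ : Fin q → V) (J : Finset V), J ⊆ Finset.univ.image φ \ C →
      Disjoint E J → 
      (Finset.univ.filter (fun b => φ b ∈ C)).card + (Finset.univ.filter (fun b => φ b ∈ E)).card
        + J.card ≤ q := by
    intro φ J hJ hEJ
    have h1 : J.card ≤ (Finset.univ.filter (fun b => φ b ∈ J)).card := by
      have : J ⊆ (Finset.univ.filter (fun b => φ b ∈ J)).image φ := by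
        intro v hv
        have := hJ hv
        simp only [Finset.mem_sdiff, Finset.mem_image, Finset.mem_univ, true_and] at this
        obtain ⟨⟨b, hb⟩, _⟩ := this
        simp only [Finset.mem_image, Finset.mem_filter, Finset.mem_univ, true_and]
        exact ⟨b, by rw [hb]; exact hv, hb⟩
      exact (Finset.card_le_card this).trans Finset.card_image_le
    have d1 : Disjoint (Finset.univ.filter (fun b => φ b ∈ C)) (Finset.univ.filter (fun b => φ b ∈ E)) := by
      rw [Finset.disjoint_filter]; intro b _ h1 h2; exact hEC _ h2 h1
    have d2 : Disjoint (Finset.univ.filter (fun b => φ b ∈ C) ∪ Finset.univ.filter (fun b => φ b ∈ E))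
        (Finset.univ.filter (fun b => φ b ∈ J)) := by
      rw [Finset.disjoint_union_left]
      constructor
      · rw [Finset.disjoint_filter]; intro b _ h1 h2
        have := hJ h2; rw [Finset.mem_sdiff] at this; exact this.2 h1
      · rw [Finset.disjoint_filter]; intro b _ h1 h2
        exact Finset.disjoint_left.mp hEJ h1 h2
    have h3 := Finset.card_le_univ ((Finset.univ.filter (fun b => φ b ∈ C) ∪ Finset.univ.filter (fun b => φ b ∈ E))
        ∪ (Finset.univ.filter (fun b => φ b ∈ J)))
    rw [Finset.card_union_of_disjoint d2, Finset.card_union_of_disjoint d1, Fintype.card_fin] at h3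
    omega
  have hEIa : ∀ a, Disjoint E (I a) := fun a =>
    Finset.disjoint_left.mpr (fun e he => hEI e he a)
  have hs1 : ∀ a, (X a C).card + (X a E).card + (I a).card ≤ q := fun a =>
    hside (f a) (I a) (Finset.sdiff_subset_sdiff Finset.inter_subset_left le_rfl) (hEIa a)
  have hs2 : ∀ a, (Z a C).card + (Z a E).card + (I a).card ≤ q := fun a =>
    hside (g a) (I a) (Finset.sdiff_subset_sdiff Finset.inter_subset_right le_rfl) (hEIa a)
  have hPX : ∀ a, (P a).card ≤ (X a C).card := fun a => by
    rw [← hPs, ← hXC]; exact Finset.sum_le_sum (hPx a)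
  have hPZ : ∀ a, (P a).card ≤ (Z a C).card := fun a => by
    rw [← hPs, ← hZC]; exact Finset.sum_le_sum (hPz a)
  have hsp : ∀ (s t : V → ℕ), ∑ w ∈ C, s w * t w ≤ (∑ w ∈ C, s w) * ∑ w ∈ C, t w := by
    intro s t
    rw [Finset.sum_mul]
    apply Finset.sum_le_sum
    intro w hw
    exact Nat.mul_le_mul_left _ (Finset.single_le_sum (f := t) (fun _ _ => Nat.zero_le _) hw)
  have hS : ∀ a, ∑ w ∈ C, (X a {w}).card * (Z a {w}).card ≤ (P a).card
      + ((X a C).card - (P a).card) + ((Z a C).card - (P a).card)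
      + ((X a C).card - (P a).card) * ((Z a C).card - (P a).card) := by
    intro a
    set s : V → ℕ := fun w => (X a {w}).card - (if w ∈ P a then 1 else 0) with hs
    set t : V → ℕ := fun w => (Z a {w}).card - (if w ∈ P a then 1 else 0) with ht
    have e1 : ∑ w ∈ C, s w = (X a C).card - (P a).card := by
      rw [Finset.sum_tsub_distrib C (hPx a), hXC, hPs]
    have e2 : ∑ w ∈ C, t w = (Z a C).card - (P a).card := by
      rw [Finset.sum_tsub_distrib C (hPz a), hZC, hPs]
    rw [← e1, ← e2]
    refine le_trans ?_ (Nat.add_le_add_left (hsp s t) _)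
    rw [← hPs a, ← Finset.sum_add_distrib, ← Finset.sum_add_distrib, ← Finset.sum_add_distrib]
    apply Finset.sum_le_sum
    intro w hw
    have h1 := hPx a w hw
    have h2 := hPz a w hw
    simp only [hs, ht]
    generalize (X a {w}).card = x at *
    generalize (Z a {w}).card = z at *
    split_ifs at h1 h2 ⊢
    · obtain ⟨x', rfl⟩ := Nat.exists_eq_add_of_le h1
      obtain ⟨z', rfl⟩ := Nat.exists_eq_add_of_le h2
      simp only [Nat.add_sub_cancel_left]
      nlinarith
    · simp
  have hper : ∀ a, ∑ w ∈ C, (X a {w}).card * (Z a {w}).card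
      + (X a C).card * (Z a E).card + (X a E).card * (Z a C).card ≤
      (P a).card + ((q + 1) + (2 * (P a).card - (q + 1))) * (q - (I a).card - (P a).card) := by
    intro a
    apply arith_one _ _ _ _ _ _ _ _ (hs1 a) (hs2 a) (hPX a) (hPZ a) (hS a)
    intro _
    rw [← hXC, ← hZC]
    exact hsp _ _
  have hfin := htot.trans (Finset.sum_le_sum (fun a _ => hper a))
  set d : Fin q → ℕ := fun a => q - (I a).card - (P a).card with hd
  have hdP : ∀ a, (P a).card + d a + (I a).card = q := by
    intro a
    have := hs1 a
    have := hPX a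
    simp only [hd]; omega
  have h2 := arith_two q (fun a => (P a).card) d hsumP (fun a => by have := hdP a; omega) hp
  have hq : ∑ a, (P a).card + ∑ a, d a + ∑ a, (I a).card = q ^ 2 := by
    rw [← Finset.sum_add_distrib, ← Finset.sum_add_distrib, Finset.sum_congr rfl (fun a _ => hdP a)]
    simp [sq]
  rw [Finset.sum_add_distrib, hsumP] at hfin
  simp only [add_mul (q + 1)] at hfin
  rw [Finset.sum_add_distrib, ← Finset.mul_sum] at hfin
  have hElow : ∑ a, d a + 1 ≤ E.card := by omega
  have : (q + 1) * (∑ a, d a + 1) ≤ (q + 1) * E.card := Nat.mul_le_mul_left _ hElow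
  rw [mul_add] at this hfin
  have e : ∀ a, q - (I a).card - (P a).card = d a := fun a => rfl
  simp only [e] at hfin
  omega

lemma good_vertex {V : Type*} [DecidableEq V] (q : ℕ) (C : Finset V)
    (hC : C.card = q + 1) (z : Fin 6 → V → Fin q)
    (hz : ∀ i j k, i ≠ j → i ≠ k → j ≠ k → ∀ w w', z i w = z i w' → z j w = z j w' →
      z k w = z k w' → w = w') :
    ∃ i, q + 1 ≤ 11 ∨ ∀ a, 2 * (C.filter (fun w => z i w = a)).card ≤ q + 1 + 2 := by
  classical
  by_contra hcon
  push Not at hcon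
  have hq : 11 < q + 1 := (hcon 0).1
  choose a ha using fun i => (hcon i).2
  set Kw : V → Finset (Fin 6) := fun w => Finset.univ.filter (fun i => z i w = a i) with hKw
  have h1 : ∑ w ∈ C, (Kw w).card = ∑ i, (C.filter (fun w => z i w = a i)).card := by
    simp only [hKw, Finset.card_filter]
    rw [Finset.sum_comm]
  have h2 : 6 * (q + 1 + 3) ≤ 2 * ∑ w ∈ C, (Kw w).card := by
    rw [h1, Finset.mul_sum]
    have := Finset.sum_le_sum (s := (Finset.univ : Finset (Fin 6)))
      (f := fun _ => q + 1 + 3) (g := fun i => 2 * (C.filter (fun w => z i w = a i)).card)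
      (fun i _ => ha i)
    simpa using this
  have h3 : ∑ w ∈ C, (Finset.powersetCard 3 (Kw w)).card ≤ 20 := by
    rw [← Finset.card_sigma]
    have : (Finset.powersetCard 3 (Finset.univ : Finset (Fin 6))).card = 20 := by
      rw [Finset.card_powersetCard]; rfl
    rw [← this]
    apply Finset.card_le_card_of_injOn (fun s => s.2)
    · rintro ⟨w, s⟩ hs
      simp only [Finset.coe_sigma, Set.mem_sigma_iff, Finset.mem_coe, Finset.mem_powersetCard] at hs
      simp only [Finset.mem_coe, Finset.mem_powersetCard]
      exact ⟨Finset.subset_univ _, hs.2.2⟩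
    · rintro ⟨w, s⟩ hs ⟨w', s'⟩ hs' h
      simp only [Finset.coe_sigma, Set.mem_sigma_iff, Finset.mem_coe,
        Finset.mem_powersetCard] at hs hs' h
      subst h
      obtain ⟨i, j, k, hij, hik, hjk, rfl⟩ := Finset.card_eq_three.mp hs.2.2
      have e : ∀ x ∈ ({i, j, k} : Finset (Fin 6)), z x w = z x w' := by
        intro x hx
        have m1 := hs.2.1 hx
        have m2 := hs'.2.1 hx
        simp only [hKw, Finset.mem_filter] at m1 m2
        rw [m1.2, m2.2]
      have := hz i j k hij hik hjk w w' (e i (by simp)) (e j (by simp)) (e k (by simp))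
      rw [this]
  have h4 : ∑ w ∈ C, (Kw w).card ≤ ∑ w ∈ C, (2 + (Finset.powersetCard 3 (Kw w)).card) := by
    apply Finset.sum_le_sum
    intro w _
    rw [Finset.card_powersetCard]
    have : (Kw w).card ≤ 6 := by simpa using Finset.card_le_univ (Kw w)
    generalize (Kw w).card = m at *
    interval_cases m <;> decide
  rw [Finset.sum_add_distrib, Finset.sum_const, hC, smul_eq_mul] at h4
  omega

lemma cast_ne (n a b : ℕ) (ha : a < n) (hb : b < n) (hab : a ≠ b) :
    (a : ZMod n) ≠ (b : ZMod n) := by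
  intro h
  rw [ZMod.natCast_eq_natCast_iff] at h
  exact hab (Nat.ModEq.eq_of_lt_of_lt h ha hb)

lemma zero_notMem_nbhd (n h t s : ℕ) (hn : n = 4 * t + 3) (hh : h ≤ t)
    (hs1 : t + 1 ≤ s) (hs2 : s ≤ 3 * t + 2) : (0 : ZMod n) ∉ nbhd n h (s : ZMod n) := by
  intro hmem
  simp only [nbhd, Finset.mem_image, Finset.mem_Icc] at hmem
  obtain ⟨d, ⟨hd1, hd2⟩, hd⟩ := hmem
  have : ((((s : ℤ) + d : ℤ)) : ZMod n) = 0 := by push_cast; exact hd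
  rw [ZMod.intCast_zmod_eq_zero_iff_dvd] at this
  have := Int.le_of_dvd (by omega) this
  omega

/-- The far servers. -/
def farSet (n t : ℕ) : Finset (ZMod n) :=
  (Finset.Icc (t + 1) (3 * t + 2)).image (fun s : ℕ => (s : ZMod n))

lemma farSet_card (n t : ℕ) (hn : n = 4 * t + 3) : (farSet n t).card = 2 * t + 2 := by
  rw [farSet, Finset.card_image_of_injOn]
  · simp; omega
  · intro a ha b hb hab
    simp only [Finset.coe_Icc, Set.mem_Icc] at ha hb
    by_contra hne
    exact cast_ne n a b (by omega) (by omega) hne hab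

lemma zero_notMem_farSet (n t : ℕ) (hn : n = 4 * t + 3) : (0 : ZMod n) ∉ farSet n t := by
  intro h
  simp only [farSet, Finset.mem_image, Finset.mem_Icc] at h
  obtain ⟨a, ha, hh⟩ := h
  exact cast_ne n a 0 (by omega) (by omega) (by omega) (by simpa using hh)

/-- Abstract coding part. -/
lemma main_abs (n h K q t : ℕ) [NeZero n] (hn : n = 4 * t + 3) (ht : 2 ≤ t) (hh : h ≤ t)
    (hq : 0 < q) (code : MVCode n (2 * t + 3) (2 * t + 3) 2 h K q) (hM : q ^ 2 < 2 ^ K) :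
    False := by
  classical
  set far := farSet n t with hfar
  have hfc : far.card = 2 * t + 2 := farSet_card n t hn
  have h0 : (0 : ZMod n) ∉ far := zero_notMem_farSet n t hn
  have hnb : ∀ i ∈ far, (0 : ZMod n) ∉ nbhd n h i := by
    intro i hi
    simp only [hfar, farSet, Finset.mem_image, Finset.mem_Icc] at hi
    obtain ⟨s, hs, rfl⟩ := hi
    exact zero_notMem_nbhd n h t s hn hh hs.1 hs.2
  clear_value far
  set A : Finset (ZMod n) := insert 0 far with hA
  have hAc : A.card = 2 * t + 3 := by rw [hA, Finset.card_insert_of_notMem h0, hfc]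
  have hNc : (Aᶜ).card = 2 * t := by
    rw [Finset.card_compl, hAc, ZMod.card]; omega
  set S2 : ZMod n → Finset (Fin 2) := fun i => if i ∈ far then Finset.univ else
    if i = 0 then {0} else ∅ with hS2
  set S3 : ZMod n → Finset (Fin 2) := fun i => if i ∈ A then Finset.univ else ∅ with hS3
  have hS23 : ∀ i, i ≠ 0 → S2 i = S3 i := by
    intro i hi; simp [hS2, hS3, hA, hi]
  have henc23 : ∀ i ∈ far, ∀ W, code.enc i S2 W = code.enc i S3 W := by
    intro i hi W
    apply code.enc_local_state
    intro j hj
    apply hS23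
    rintro rfl
    exact hnb i hi hj
  have hN2 : ∀ i ∈ Aᶜ, ∀ W W', code.enc i S2 W = code.enc i S2 W' := by
    intro i hi W W'
    apply code.enc_local_word
    simp [hA] at hi
    simp [hS2, hi]
  have hN3 : ∀ i ∈ Aᶜ, ∀ W W', code.enc i S3 W = code.enc i S3 W' := by
    intro i hi W W'
    apply code.enc_local_word
    simp only [Finset.mem_compl] at hi
    simp [hS3, hi]
  have hz2 : ∀ W W', W 0 = W' 0 → code.enc 0 S2 W = code.enc 0 S2 W' := by
    intro W W' hW
    apply code.enc_local_word
    simp [hS2, h0, hW]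
  have hr2 : received n 2 S2 0 = A := by
    ext i; simp only [received, hS2, Finset.mem_filter, Finset.mem_univ, true_and, hA,
      Finset.mem_insert]
    split_ifs <;> simp_all
  have hr3 : received n 2 S3 1 = A := by
    ext i; simp only [received, hS3, Finset.mem_filter, Finset.mem_univ, true_and]
    split_ifs <;> simp_all
  let V := Fin K → Bool
  have hVc : Fintype.card V = 2 ^ K := by simp [V]
  -- pigeonhole
  obtain ⟨b, hb⟩ : ∃ b : Fin q, q < (Finset.univ.filter
      (fun w : V => code.enc 0 S2 ![w, w] = b)).card := by
    obtain ⟨b, _, hb⟩ := Finset.exists_lt_card_fiber_of_mul_lt_card_of_maps_to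
      (s := (Finset.univ : Finset V)) (t := (Finset.univ : Finset (Fin q))) (n := q)
      (f := fun w => code.enc 0 S2 ![w, w]) (fun _ _ => Finset.mem_univ _) (by
        rw [Finset.card_univ, Finset.card_univ, hVc, Fintype.card_fin, ← sq]; exact hM)
    exact ⟨b, hb⟩
  obtain ⟨C, hCs, hC⟩ := Finset.exists_subset_card_eq (show q + 1 ≤ _ from hb)
  have hCb : ∀ w ∈ C, ∀ v, code.enc 0 S2 ![w, v] = b := by
    intro w hw v
    have := hCs hw
    simp only [Finset.mem_filter, Finset.mem_univ, true_and] at this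
    rw [← this]
    exact hz2 _ _ rfl
  set y : ZMod n → V → V → Fin q := fun i w v => code.enc i S2 ![w, v] with hy
  have hpair : ∀ i ∈ far, ∀ j ∈ far, i ≠ j → ∃ f : Fin q → Fin q → V,
      ∀ w ∈ C, ∀ v, f (y i w v) (y j w v) = w ∨ f (y i w v) (y j w v) = v := by
    intro i hi j hj hij
    set T : Finset (ZMod n) := insert 0 (insert i (insert j Aᶜ)) with hT
    have hi0 : i ≠ 0 := fun h => h0 (h ▸ hi)
    have hj0 : j ≠ 0 := fun h => h0 (h ▸ hj)
    have hTc : T.card = 2 * t + 3 := by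
      rw [hT, Finset.card_insert_of_notMem, Finset.card_insert_of_notMem,
        Finset.card_insert_of_notMem, hNc]
      · simp [hA, hj]
      · simp [hA, hi, hij]
      · simp [hA, hi0.symm, hj0.symm]
    refine ⟨fun α β => (code.dec S2 T (fun k => if k = i then α else if k = j then β else
      if k = 0 then b else code.enc k S2 (fun _ _ => false))).getD (fun _ => false), ?_⟩
    intro w hw v
    obtain ⟨m, _, hm⟩ := code.dec_correct S2 ![w, v] T hTc ⟨0, by rw [hr2, hAc]⟩
    have hloc := code.dec_local S2 T (fun k => if k = i then y i w v else if k = j then y j w v else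
      if k = 0 then b else code.enc k S2 (fun _ _ => false)) (fun k => code.enc k S2 ![w, v]) (by
        intro k hk
        split_ifs with e1 e2 e3
        · rw [e1]
        · rw [e2]
        · rw [e3]; exact (hCb w hw v).symm
        · apply hN2
          simp only [hT, Finset.mem_insert, e1, e2, e3, false_or] at hk
          exact hk)
    simp only [hloc, hm, Option.getD_some]
    fin_cases m <;> simp
  have htri : ∀ i ∈ far, ∀ j ∈ far, ∀ k ∈ far, i ≠ j → i ≠ k → j ≠ k → ∀ w w' v v',
      y i w v = y i w' v' → y j w v = y j w' v' → y k w v = y k w' v' → v = v' := by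
    intro i hi j hj k hk hij hik hjk w w' v v' ei ej ek
    set T : Finset (ZMod n) := insert i (insert j (insert k Aᶜ)) with hT
    have hTc : T.card = 2 * t + 3 := by
      rw [hT, Finset.card_insert_of_notMem, Finset.card_insert_of_notMem,
        Finset.card_insert_of_notMem, hNc]
      · simp [hA, hk]
      · simp [hA, hj, hjk]
      · simp [hA, hi, hij, hik]
    have hdec : ∀ w v : V, code.dec S3 T (fun k => code.enc k S3 ![w, v]) = some v := by
      intro w v
      obtain ⟨m, hm1, hm⟩ := code.dec_correct S3 ![w, v] T hTc ⟨1, by rw [hr3, hAc]⟩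
      have h1 := hm1 1 (by rw [hr3, hAc])
      have : m = 1 := by omega
      subst this
      simpa using hm
    have hloc := code.dec_local S3 T (fun k => code.enc k S3 ![w, v])
      (fun k => code.enc k S3 ![w', v']) (by
        intro l hl
        simp only [hT, Finset.mem_insert] at hl
        rcases hl with rfl | rfl | rfl | hl
        · simp only [← henc23 _ hi]; exact ei
        · simp only [← henc23 _ hj]; exact ej
        · simp only [← henc23 _ hk]; exact ek
        · exact hN3 _ hl _ _)
    rw [hdec, hdec] at hloc
    exact Option.some_injective _ hloc
  -- six distinct far servers
  obtain ⟨D, hDs, hD⟩ := Finset.exists_subset_card_eq (show 6 ≤ far.card by omega)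
  let e : Fin 6 ≃ D := (D.equivFinOfCardEq hD).symm
  have hef : ∀ i, (e i : ZMod n) ∈ far := fun i => hDs (e i).2
  have hei : ∀ i j, i ≠ j → (e i : ZMod n) ≠ (e j : ZMod n) := by
    intro i j hij hcon
    exact hij (e.injective (Subtype.ext hcon))
  obtain ⟨i, hgood⟩ := good_vertex q C hC (fun i w => y (e i) w w) (by
    intro i j k hij hik hjk w w' h1 h2 h3
    exact htri _ (hef i) _ (hef j) _ (hef k) (hei _ _ hij) (hei _ _ hik) (hei _ _ hjk)
      _ _ _ _ h1 h2 h3)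
  obtain ⟨j, k, hij, hik, hjk⟩ : ∃ j k : Fin 6, i ≠ j ∧ i ≠ k ∧ j ≠ k := by
    clear hgood
    revert i; decide
  obtain ⟨f, hf⟩ := hpair _ (hef i) _ (hef j) (hei _ _ hij)
  obtain ⟨g, hg⟩ := hpair _ (hef i) _ (hef k) (hei _ _ hik)
  exact core q C hC (by rw [hVc]; exact hM) (y (e i)) (y (e j)) (y (e k)) f g hf hg
    (fun w _ v v' h1 h2 h3 => htri _ (hef i) _ (hef j) _ (hef k) (hei _ _ hij) (hei _ _ hik)
      (hei _ _ hjk) _ _ _ _ h1 h2 h3) hgood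

/-- Corollary 1: for `n ≥ 11` with `n ≡ 3 (mod 4)`, `ν = 2`,
`c_W = c_R = (n+3)/2` (so `c = 3`) and `h ≤ (n-3)/4`, every
`(n, (n+3)/2, (n+3)/2, 2, h, 2^K, q)` multi-version code with side information
satisfies `q² ≥ 2^K`, i.e. its storage cost satisfies `log₂ q ≥ K/2`. -/
theorem converse_side_info_may_not_help (n h K q : ℕ) [NeZero n]
    (hn : 11 ≤ n) (hmod : n % 4 = 3)
    (hh0 : 0 < h) (hh : h ≤ (n - 3) / 4) (h2h : 2 * h + 1 ≤ n)
    (hK : 0 < K) (hq : 0 < q)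
    (code : MVCode n ((n + 3) / 2) ((n + 3) / 2) 2 h K q) :
    2 ^ K ≤ q ^ 2 := by
  by_contra hcon
  obtain ⟨t, ht⟩ : ∃ t, n = 4 * t + 3 := ⟨n / 4, by omega⟩
  have e : (n + 3) / 2 = 2 * t + 3 := by omega
  rw [e] at code
  exact main_abs n h K q t ht (by omega) (by omega) hq code (by omega)
end
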